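/- Let 𝒫 = (P, μ, σ) be an n-dimensional system and for T ≥ 0 let u_T^can denote the μ-canonical distribution of temperature T; set u_∞^can := 1_P, the constant function 1. Then the map [0,∞] → L^p(P, μ), T ↦ u_T^can, is continuous for every p ∈ [1, n/(n−1)) (in particular u_T^can → 1_P in L^p as T → ∞), the functions T ↦ F_𝒫(T, u_T^can), T ↦ U_𝒫(u_T^can), T ↦ S_𝒫(u_T^can) are continuous on [0,∞), and moreover lim_{T→∞} F_𝒫(T, u_T^can) = lim_{T→∞} U_𝒫(u_T^can) = U_𝒫(1_P) and lim_{T→∞} T·S_𝒫(u_T^can) = 0. -/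

import Mathlib

open MeasureTheory Filter Topology
open scoped ENNReal NNReal

noncomputable section

abbrev Euc (n : ℕ) := EuclideanSpace ℝ (Fin n)

/-- A `[0,∞]`-valued function on a set `K ⊆ ℝⁿ` is convex if
`u((1−t)x+ty) ≤ (1−t)u(x)+t·u(y)` in `[0,∞]` for all `x, y ∈ K` and `t ∈ [0,1]`. -/
def ConvexFnOn {n : ℕ} (K : Set (Euc n)) (u : Euc n → ℝ≥0∞) : Prop :=
  ∀ ⦃x⦄, x ∈ K → ∀ ⦃y⦄, y ∈ K → ∀ ⦃t : ℝ⦄, 0 ≤ t → t ≤ 1 →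
    u ((1 - t) • x + t • y) ≤ ENNReal.ofReal (1 - t) * u x + ENNReal.ofReal t * u y

/-- A polytope: a compact set with nonempty interior which is a finite
intersection of closed half-spaces (cut out by nonzero affine functions). -/
def IsPolytope {n : ℕ} (P : Set (Euc n)) : Prop :=
  IsCompact P ∧ (interior P).Nonempty ∧
    ∃ (m : ℕ) (L : Fin m → (Euc n →ᵃ[ℝ] ℝ)),
      (∀ k, L k ≠ 0) ∧ P = ⋂ k, {x | 0 ≤ L k x}

/-- `F` is a face of `P`: the intersection of `P` with the zero locus of a
nonzero affine function that is nonnegative on `P`. -/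
def IsFaceOf {n : ℕ} (P F : Set (Euc n)) : Prop :=
  ∃ ℓ : Euc n →ᵃ[ℝ] ℝ, ℓ ≠ 0 ∧ (∀ y ∈ P, 0 ≤ ℓ y) ∧ F = {y ∈ P | ℓ y = 0}

/-- A facet: a face spanning an affine subspace of dimension `n − 1`. -/
def IsFacetOf {n : ℕ} (P F : Set (Euc n)) : Prop :=
  IsFaceOf P F ∧ Module.finrank ℝ (vectorSpan ℝ F) + 1 = n

/-- A simple polytope: every vertex lies on exactly `n` facets. -/
def IsSimplePolytope {n : ℕ} (P : Set (Euc n)) : Prop :=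
  IsPolytope P ∧ ∀ v : Euc n, IsFaceOf P {v} →
    {F : Set (Euc n) | IsFacetOf P F ∧ v ∈ F}.ncard = n

/-- An `n`-dimensional system `𝒫 = (P, μ, σ)`: a simple polytope `P ⊆ ℝⁿ`, a flat
measure `μ` on `P` (a positive constant multiple of Lebesgue measure restricted
to `P`), and a flat measure `σ` on `∂P` (supported on the boundary and, on each
facet, a positive constant multiple of `(n−1)`-dimensional Hausdorff measure). -/
structure NSystem (n : ℕ) where
  P : Set (Euc n)
  μ : Measure (Euc n)
  σ : Measure (Euc n)
  simple : IsSimplePolytope P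
  flat : ∃ c : ℝ, 0 < c ∧ μ = ENNReal.ofReal c • volume.restrict P
  bdry_supp : σ (frontier P)ᶜ = 0
  flat_bdry : ∀ F : Set (Euc n), IsFacetOf P F →
    ∃ c : ℝ, 0 < c ∧ σ.restrict F =
      ENNReal.ofReal c • (Measure.hausdorffMeasure ((n : ℝ) - 1)).restrict F

/-- `y log y`, computed via the real value of `y ∈ [0,∞]`. -/
def xlogx (y : ℝ≥0∞) : ℝ := y.toReal * Real.log y.toReal

/-- `∫_A u log u dμ ∈ (−∞, ∞]`, as an extended real number. -/
def entOn {n : ℕ} (μ : Measure (Euc n)) (A : Set (Euc n)) (u : Euc n → ℝ≥0∞) : EReal :=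
  ((∫⁻ x in A, ENNReal.ofReal (xlogx (u x)) ∂μ : ℝ≥0∞) : EReal)
    - ((∫⁻ x in A, ENNReal.ofReal (-(xlogx (u x))) ∂μ : ℝ≥0∞) : EReal)

/-- `u : P → (0,∞]` is log-convex: `u((1−t)x+ty) ≤ u(x)^{1−t} u(y)^t`. -/
def LogConvexOn {n : ℕ} (P : Set (Euc n)) (u : Euc n → ℝ≥0∞) : Prop :=
  ∀ ⦃x⦄, x ∈ P → ∀ ⦃y⦄, y ∈ P → ∀ ⦃t : ℝ⦄, 0 ≤ t → t ≤ 1 →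
    u ((1 - t) • x + t • y) ≤ u x ^ (1 - t) * u y ^ t

/-- `ℳ^{exp,p}(P)`: lower semi-continuous log-convex `u : P → (0,∞]` with
`∫_P u dμ = μ(P)` and `∫_P u^p dμ < ∞`. -/
def MExp {n : ℕ} (S : NSystem n) (p : ℝ) : Set (Euc n → ℝ≥0∞) :=
  {u | LowerSemicontinuousOn u S.P ∧ (∀ x ∈ S.P, 0 < u x) ∧ LogConvexOn S.P u ∧
    (∫⁻ x in S.P, u x ∂S.μ) = S.μ S.P ∧ (∫⁻ x in S.P, u x ^ p ∂S.μ) < ⊤}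

/-- The nonequilibrium entropy `S_𝒫(u) = −(1/μ(P)) ∫_P u log u dμ ∈ [−∞, 0]`. -/
def Spf {n : ℕ} (S : NSystem n) (u : Euc n → ℝ≥0∞) : EReal :=
  (((S.μ S.P).toReal⁻¹ : ℝ) : EReal) *
    (((∫⁻ x in S.P, ENNReal.ofReal (-(xlogx (u x))) ∂S.μ : ℝ≥0∞) : EReal)
      - ((∫⁻ x in S.P, ENNReal.ofReal (xlogx (u x)) ∂S.μ : ℝ≥0∞) : EReal))

/-- The internal μ-energy `U_𝒫(u) = (1/μ(P)) ∫_{∂P} u dσ ∈ (0, ∞]`. -/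
def Upf {n : ℕ} (S : NSystem n) (u : Euc n → ℝ≥0∞) : ℝ≥0∞ :=
  (S.μ S.P)⁻¹ * ∫⁻ x in frontier S.P, u x ∂S.σ

/-- The free μ-energy `F_𝒫(T,u) = U_𝒫(u) − T·S_𝒫(u)` if `S_𝒫(u) > −∞`, else `∞`. -/
def Fpf {n : ℕ} (S : NSystem n) (T : ℝ) (u : Euc n → ℝ≥0∞) : EReal :=
  if Spf S u = ⊥ then ⊤ else (Upf S u : EReal) - (T : EReal) * Spf S u

/-- `u` is the μ-canonical distribution of temperature `T ≥ 0`: for `T > 0` the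
minimizer of `F_𝒫(T,·)` on `ℳ^{exp,1}(P)`; for `T = 0` the minimizer of `U_𝒫`
maximizing `S_𝒫` among all minimizers of `U_𝒫`. -/
def IsCanonical {n : ℕ} (S : NSystem n) (T : ℝ) (u : Euc n → ℝ≥0∞) : Prop :=
  u ∈ MExp S 1 ∧
  (0 < T → ∀ u' ∈ MExp S 1, Fpf S T u ≤ Fpf S T u') ∧
  (T = 0 → (∀ u' ∈ MExp S 1, Upf S u ≤ Upf S u') ∧
    ∀ u' ∈ MExp S 1, (∀ u'' ∈ MExp S 1, Upf S u' ≤ Upf S u'') → Spf S u' ≤ Spf S u)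


lemma polytope_convex {n : ℕ} {P : Set (Euc n)} (h : IsPolytope P) : Convex ℝ P := by
  obtain ⟨-, -, m, L, -, rfl⟩ := h
  refine convex_iInter fun k => ?_
  have : {x | 0 ≤ L k x} = (L k) ⁻¹' (Set.Ici 0) := rfl
  rw [this]
  exact (convex_Ici (0:ℝ)).affine_preimage (L k)

lemma ennreal_amgm {a b : ℝ≥0∞} {t : ℝ} (h0 : 0 ≤ t) (h1 : t ≤ 1) :
    a ^ (1 - t) * b ^ t ≤ ENNReal.ofReal (1 - t) * a + ENNReal.ofReal t * b := by
  rcases h0.eq_or_lt with rfl | h0'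
  · simp
  rcases h1.eq_or_lt with rfl | h1'
  · simp
  by_cases ha : a = ⊤
  · subst ha
    rw [ENNReal.mul_top (by simp; linarith)]
    simp
  by_cases hb : b = ⊤
  · subst hb
    rw [ENNReal.mul_top (by simp; linarith)]
    simp
  lift a to ℝ≥0 using ha
  lift b to ℝ≥0 using hb
  have := NNReal.geom_mean_le_arith_mean2_weighted (Real.toNNReal (1 - t)) (Real.toNNReal t) a b
    (by rw [← Real.toNNReal_add (by linarith) h0]; simp)
  rw [Real.coe_toNNReal _ (by linarith), Real.coe_toNNReal _ h0] at this
  rw [← ENNReal.coe_rpow_of_nonneg _ (by linarith), ← ENNReal.coe_rpow_of_nonneg _ h0]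
  simp only [ENNReal.ofReal]
  exact_mod_cast this

lemma LogConvexOn.convexFn {n : ℕ} {P : Set (Euc n)} {u : Euc n → ℝ≥0∞} (h : LogConvexOn P u) :
    ConvexFnOn P u := fun _ hx _ hy _ h0 h1 => (h hx hy h0 h1).trans (ennreal_amgm h0 h1)

lemma holder2 {a₁ a₂ b₁ b₂ : ℝ≥0∞} {t : ℝ} (h0 : 0 ≤ t) (h1 : t ≤ 1) :
    a₁ ^ (1 - t) * a₂ ^ t + b₁ ^ (1 - t) * b₂ ^ t ≤ (a₁ + b₁) ^ (1 - t) * (a₂ + b₂) ^ t := by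
  rcases h0.eq_or_lt with rfl | h0'
  · simp
  rcases h1.eq_or_lt with rfl | h1'
  · simp
  have hpq : (1/(1-t)).HolderConjugate (1/t) := by
    rw [Real.holderConjugate_iff]
    refine ⟨by rw [lt_div_iff₀] <;> linarith, by simp⟩
  have := ENNReal.inner_le_Lp_mul_Lq (Finset.univ : Finset (Fin 2))
    (fun i => (![a₁, b₁] i) ^ (1 - t)) (fun i => (![a₂, b₂] i) ^ t) hpq
  have e1 : (1 - t) ≠ 0 := by linarith
  have e2 : t ≠ 0 := by linarith
  simpa [Fin.sum_univ_two, ← ENNReal.rpow_mul, e1, e2] using this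

lemma lsc_measurable {n : ℕ} {P : Set (Euc n)} (hP : IsClosed P) {u : Euc n → ℝ≥0∞}
    (hu : LowerSemicontinuousOn u P) : Measurable (P.indicator u) := by
  refine measurable_of_Ioi fun a => ?_
  have : P.indicator u ⁻¹' Set.Ioi a = P ∩ u ⁻¹' Set.Ioi a := by
    ext x
    by_cases hx : x ∈ P <;> simp [hx]
  rw [this]
  obtain ⟨v, hv, e⟩ := lowerSemicontinuousOn_iff_preimage_Ioi.1 hu a
  rw [e]
  exact hP.measurableSet.inter hv.measurableSet

lemma lsc_aemeasurable {n : ℕ} {P : Set (Euc n)} (hP : IsClosed P) {u : Euc n → ℝ≥0∞}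
    (hu : LowerSemicontinuousOn u P) {A : Set (Euc n)} (hA : MeasurableSet A) (hAP : A ⊆ P)
    (ν : Measure (Euc n)) : AEMeasurable u (ν.restrict A) := by
  refine ⟨P.indicator u, lsc_measurable hP hu, ?_⟩
  filter_upwards [ae_restrict_mem hA] with x hx
  rw [Set.indicator_of_mem (hAP hx)]

lemma convex_avg {n : ℕ} {P : Set (Euc n)} (hP : IsClosed P) {u : Euc n → ℝ≥0∞}
    (hl : LowerSemicontinuousOn u P)
    (hu : ConvexFnOn P u) {x : Euc n} {r : ℝ} (hr : Metric.ball x r ⊆ P) :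
    volume (Metric.ball x r) * u x ≤ ∫⁻ y in Metric.ball x r, u y := by
  set v := P.indicator u with hv
  have hvm : Measurable v := lsc_measurable hP hl
  have key : ∀ w ∈ Metric.ball (0 : Euc n) r, u x ≤ 2⁻¹ * v (x + w) + 2⁻¹ * v (x - w) := by
    intro w hw
    have h1 : x + w ∈ P := hr (by simpa using hw)
    have h2 : x - w ∈ P := hr (by simpa using hw)
    have := hu h1 h2 (t := 1/2) (by norm_num) (by norm_num)
    rw [hv, Set.indicator_of_mem h1, Set.indicator_of_mem h2]
    have e : ENNReal.ofReal (1/2) = 2⁻¹ := by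
      rw [ENNReal.ofReal_div_of_pos (by norm_num)]; simp
    rw [show (1 - 1/2 : ℝ) = 1/2 by norm_num, e] at this
    convert this using 2
    module
  have e1 : ∫⁻ w in Metric.ball (0 : Euc n) r, v (x + w) = ∫⁻ y in Metric.ball x r, u y := by
    rw [← lintegral_indicator measurableSet_ball, ← lintegral_indicator measurableSet_ball,
      ← lintegral_add_left_eq_self ((Metric.ball x r).indicator _) x]
    congr 1
    ext w
    classical
    rw [Set.indicator_apply, Set.indicator_apply]
    by_cases hw : w ∈ Metric.ball (0 : Euc n) r
    · have h1 : x + w ∈ Metric.ball x r := by simpa using hw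
      rw [if_pos hw, if_pos h1, hv, Set.indicator_of_mem (hr h1)]
    · have h1 : x + w ∉ Metric.ball x r := by simpa using hw
      rw [if_neg hw, if_neg h1]
  have e2 : ∫⁻ w in Metric.ball (0 : Euc n) r, v (x - w) = ∫⁻ y in Metric.ball x r, u y := by
    rw [← e1, ← lintegral_indicator measurableSet_ball, ← lintegral_indicator measurableSet_ball,
      ← lintegral_neg_eq_self]
    congr 1
    ext w
    classical
    simp [Set.indicator_apply, sub_eq_add_neg]
  have hx : volume (Metric.ball x r) = volume (Metric.ball (0 : Euc n) r) :=
    Measure.addHaar_ball_center _ _ _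
  calc volume (Metric.ball x r) * u x = ∫⁻ w in Metric.ball (0 : Euc n) r, u x := by
        rw [setLIntegral_const, hx, mul_comm]
    _ ≤ ∫⁻ w in Metric.ball (0 : Euc n) r, (2⁻¹ * v (x + w) + 2⁻¹ * v (x - w)) :=
        setLIntegral_mono' measurableSet_ball key
    _ = ∫⁻ y in Metric.ball x r, u y := by
        rw [lintegral_add_left (by fun_prop), lintegral_const_mul _ (by fun_prop),
          lintegral_const_mul _ (by fun_prop), e1, e2, ← add_mul, ENNReal.inv_two_add_inv_two,
          one_mul]

lemma power_trunc {α : Type*} [MeasurableSpace α] {ν : Measure α} [IsFiniteMeasure ν]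
    {h : ℕ → α → ℝ≥0∞} (hm : ∀ k, AEMeasurable (h k) ν)
    (h0 : ∀ᵐ x ∂ν, Tendsto (fun k => h k x) atTop (𝓝 0)) {p q : ℝ} (hp : 0 < p) (hpq : p < q)
    {C : ℝ≥0∞} (hC : C ≠ ⊤) (hb : ∀ k, ∫⁻ x, h k x ^ q ∂ν ≤ C) :
    Tendsto (fun k => ∫⁻ x, h k x ^ p ∂ν) atTop (𝓝 0) := by
  have step : ∀ M : ℝ≥0, 0 < M → ∀ k, ∫⁻ x, h k x ^ p ∂ν ≤
      (∫⁻ x, (min (h k x) M) ^ p ∂ν) + (M : ℝ≥0∞) ^ (p - q) * C := by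
    intro M hM k
    have hM0 : (M : ℝ≥0∞) ≠ 0 := by exact_mod_cast hM.ne'
    have pt : ∀ x, h k x ^ p ≤ (min (h k x) M) ^ p + (M : ℝ≥0∞) ^ (p - q) * h k x ^ q := by
      intro x
      rcases le_total (h k x) M with hx | hx
      · rw [min_eq_left hx]; exact le_self_add
      · refine le_trans ?_ le_add_self
        by_cases ht : h k x = ⊤
        · rw [ht, ENNReal.top_rpow_of_pos hp, ENNReal.top_rpow_of_pos (hp.trans hpq), ENNReal.mul_top]
          simp [ENNReal.rpow_eq_zero_iff, hM0]
        · have hx0 : h k x ≠ 0 := fun hh => hM0 (le_antisymm (hh ▸ hx) bot_le)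
          have e : h k x ^ p = h k x ^ (p - q) * h k x ^ q := by
            rw [← ENNReal.rpow_add _ _ hx0 ht]; ring_nf
          rw [e]
          gcongr ?_ * _
          rw [show p - q = -(q - p) by ring, ENNReal.rpow_neg, ENNReal.rpow_neg]
          exact ENNReal.inv_le_inv.2 (ENNReal.rpow_le_rpow hx (by linarith))
    calc ∫⁻ x, h k x ^ p ∂ν ≤ ∫⁻ x, ((min (h k x) M) ^ p + (M : ℝ≥0∞) ^ (p - q) * h k x ^ q) ∂ν :=
          lintegral_mono pt
      _ = (∫⁻ x, (min (h k x) M) ^ p ∂ν) + (M : ℝ≥0∞) ^ (p - q) * ∫⁻ x, h k x ^ q ∂ν := by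
          rw [lintegral_add_left' (((hm k).min aemeasurable_const).pow_const _),
            lintegral_const_mul'' _ ((hm k).pow_const _)]
      _ ≤ _ := by gcongr; exact hb k
  have dct : ∀ M : ℝ≥0, Tendsto (fun k => ∫⁻ x, (min (h k x) M) ^ p ∂ν) atTop (𝓝 0) := by
    intro M
    have : Tendsto (fun k => ∫⁻ x, (min (h k x) M) ^ p ∂ν) atTop (𝓝 (∫⁻ _, 0 ∂ν)) := by
      refine tendsto_lintegral_of_dominated_convergence' (fun _ => (M : ℝ≥0∞) ^ p)
        (fun k => ((hm k).min aemeasurable_const).pow_const _)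
        (fun k => Eventually.of_forall fun x => ENNReal.rpow_le_rpow (min_le_right _ _) hp.le) ?_ ?_
      · rw [lintegral_const]
        exact ENNReal.mul_ne_top (ENNReal.rpow_ne_top_of_nonneg hp.le (by simp)) (measure_ne_top _ _)
      · filter_upwards [h0] with x hx
        have h1 : Tendsto (fun k => min (h k x) (M : ℝ≥0∞)) atTop (𝓝 0) :=
          tendsto_of_tendsto_of_tendsto_of_le_of_le tendsto_const_nhds hx (fun _ => bot_le)
            (fun _ => min_le_left _ _)
        have := (ENNReal.continuous_rpow_const (y := p)).tendsto 0 |>.comp h1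
        simpa [ENNReal.zero_rpow_of_pos hp, Function.comp_def] using this
    simpa using this
  have small : Tendsto (fun M : ℝ≥0 => (M : ℝ≥0∞) ^ (p - q) * C) atTop (𝓝 0) := by
    have h1 : Tendsto (fun M : ℝ≥0 => (M : ℝ≥0∞) ^ (p - q)) atTop (𝓝 0) := by
      have h2 : Tendsto (fun M : ℝ≥0 => (M : ℝ≥0∞)) atTop (𝓝 ⊤) := 
        ENNReal.tendsto_coe_nhds_top.2 tendsto_id
      have := (ENNReal.continuous_rpow_const (y := p - q)).tendsto ⊤ |>.comp h2
      simpa [ENNReal.top_rpow_of_neg (show p - q < 0 by linarith), Function.comp_def] using this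
    simpa using ENNReal.Tendsto.mul_const h1 (Or.inr hC)
  rw [ENNReal.tendsto_nhds_zero]
  intro ε hε
  have hε2 : 0 < ε / 2 := ENNReal.half_pos hε.ne'
  obtain ⟨M, hM1, hM2⟩ := (((ENNReal.tendsto_nhds_zero.1 small) _ hε2).and
    (eventually_gt_atTop 0)).exists
  filter_upwards [(ENNReal.tendsto_nhds_zero.1 (dct M)) _ hε2] with k hk
  calc _ ≤ _ := step M hM2 k
    _ ≤ ε / 2 + ε / 2 := add_le_add hk hM1
    _ = ε := ENNReal.add_halves ε

lemma aff_cont {n : ℕ} (L : Euc n →ᵃ[ℝ] ℝ) : Continuous L := L.continuous_of_finiteDimensional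

lemma aff_combo {n : ℕ} (L : Euc n →ᵃ[ℝ] ℝ) (x y : Euc n) (t : ℝ) :
    L ((1 - t) • x + t • y) = (1 - t) * L x + t * L y := by
  have := Convex.combo_affine_apply (f := L) (x := x) (y := y) (a := 1 - t) (b := t) (by ring)
  simpa using this

/-- A nonzero affine function nonnegative on `P` is positive on the interior. -/
lemma aff_pos {n : ℕ} {P : Set (Euc n)} {L : Euc n →ᵃ[ℝ] ℝ} (hL : L ≠ 0)
    (h : ∀ y ∈ P, 0 ≤ L y) {z : Euc n} (hz : z ∈ interior P) : 0 < L z := by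
  refine lt_of_le_of_ne (h z (interior_subset hz)) fun h0 => hL ?_
  have hlin : ∀ v, L.linear v = 0 := by
    intro v
    have hc : Tendsto (fun s : ℝ => z + s • v) (𝓝 0) (𝓝 z) := by
      have : Continuous (fun s : ℝ => z + s • v) := by fun_prop
      simpa using this.tendsto 0
    have ev : ∀ᶠ s in 𝓝 (0:ℝ), z + s • v ∈ P := hc (mem_interior_iff_mem_nhds.1 hz)
    obtain ⟨ε, hε, hb⟩ := Metric.eventually_nhds_iff.1 ev
    have e : ∀ s : ℝ, L (z + s • v) = s * L.linear v := by
      intro s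
      have := L.map_vadd z (s • v)
      simp only [vadd_eq_add] at this
      rw [add_comm, this, ← h0]; simp
    have h1 := h _ (hb (y := ε/2) (by simp [abs_of_pos hε]; exact hε))
    have h2 := h _ (hb (y := -(ε/2)) (by simp [abs_of_pos hε]; exact hε))
    rw [e] at h1 h2
    nlinarith
  ext x
  have := L.map_vadd z (x - z)
  simp only [vadd_eq_add, sub_add_cancel] at this
  rw [this, hlin, ← h0]; simp

lemma facet_of_nonredundant {n : ℕ} {P : Set (Euc n)} (hne : (interior P).Nonempty)
    {ι : Type*} (I : Finset ι) (L : ι → (Euc n →ᵃ[ℝ] ℝ)) (hL : ∀ k, L k ≠ 0)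
    (hP : P = {x | ∀ k ∈ I, 0 ≤ L k x}) {k : ι} (hk : k ∈ I) {y : Euc n}
    (hy : ∀ j ∈ I, j ≠ k → 0 ≤ L j y) (hyk : L k y < 0) :
    IsFacetOf P {x ∈ P | L k x = 0} := by
  obtain ⟨z, hz⟩ := hne
  have hPk : ∀ j ∈ I, ∀ x ∈ P, 0 ≤ L j x := by
    intro j hj x hx; rw [hP] at hx; exact hx j hj
  have hzp : ∀ j ∈ I, 0 < L j z := fun j hj => aff_pos (hL j) (hPk j hj) hz
  refine ⟨⟨L k, hL k, hPk k hk, rfl⟩, ?_⟩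
  -- the linear part
  set lam := (L k).linear with hlam
  have hlam_ne : lam ≠ 0 := by
    intro h0
    have := (L k).map_vadd z (y - z)
    simp only [vadd_eq_add, sub_add_cancel] at this
    rw [← hlam, h0] at this
    simp at this
    have := hzp k hk
    linarith
  set t := L k z / (L k z - L k y) with ht
  have hden : 0 < L k z - L k y := by have := hzp k hk; linarith
  have ht0 : 0 < t := div_pos (hzp k hk) hden
  have ht1 : t < 1 := by rw [ht, div_lt_one hden]; linarith
  set w := (1 - t) • z + t • y with hw
  have hwk : L k w = 0 := by
    rw [hw, aff_combo, ht]; field_simp; ring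
  have hwj : ∀ j ∈ I, j ≠ k → 0 < L j w := by
    intro j hj hjk
    rw [hw, aff_combo]
    have := hzp j hj; have := hy j hj hjk
    have : 0 < (1 - t) * L j z := mul_pos (by linarith) (hzp j hj)
    have : 0 ≤ t * L j y := mul_nonneg ht0.le (hy j hj hjk)
    linarith
  have hnear : ∀ᶠ x in 𝓝 w, ∀ j ∈ I, j ≠ k → 0 < L j x := by
    rw [eventually_all_finset]
    intro j hj
    by_cases hjk : j = k
    · simp [hjk]
    · filter_upwards [(aff_cont (L j)).continuousAt.eventually (lt_mem_nhds (hwj j hj hjk))] with x hx _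
      exact hx
  have hadd : ∀ x v, L k (x + v) = L k x + lam v := by
    intro x v
    have := (L k).map_vadd x v
    simp only [vadd_eq_add] at this
    rw [add_comm, this, add_comm]
  have hwP : w ∈ P := by
    rw [hP]; intro j hj
    by_cases hjk : j = k
    · rw [hjk, hwk]
    · exact (hwj j hj hjk).le
  have hspan : vectorSpan ℝ {x ∈ P | L k x = 0} = LinearMap.ker lam := by
    apply le_antisymm
    · rw [vectorSpan_def, Submodule.span_le]
      rintro _ ⟨a, ha, b, hb, rfl⟩
      have := hadd b (a - b)
      simp only [add_sub_cancel] at this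
      rw [ha.2, hb.2] at this
      simp only [vsub_eq_sub, SetLike.mem_coe, LinearMap.mem_ker]
      linarith
    · intro v hv
      rw [LinearMap.mem_ker] at hv
      have hc : Tendsto (fun s : ℝ => w + s • v) (𝓝[>] 0) (𝓝 w) := by
        have : Continuous (fun s : ℝ => w + s • v) := by fun_prop
        simpa using (this.tendsto 0).mono_left nhdsWithin_le_nhds
      obtain ⟨s, hs1, hs0⟩ := ((hc.eventually hnear).and self_mem_nhdsWithin).exists
      have hs0 : (0:ℝ) < s := hs0
      have hmem : w + s • v ∈ {x ∈ P | L k x = 0} := by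
        have h0 : L k (w + s • v) = 0 := by rw [hadd, hwk]; simp [hv]
        refine ⟨?_, h0⟩
        rw [hP]; intro j hj
        by_cases hjk : j = k
        · rw [hjk, h0]
        · exact (hs1 j hj hjk).le
      have h2 := vsub_mem_vectorSpan ℝ hmem (show w ∈ {x ∈ P | L k x = 0} from ⟨hwP, hwk⟩)
      have h3 := (vectorSpan ℝ {x ∈ P | L k x = 0}).smul_mem s⁻¹ h2
      simpa [smul_smul, hs0.ne'] using h3
  rw [hspan]
  have h1 := LinearMap.finrank_range_add_finrank_ker lam
  have h2 : LinearMap.range lam = ⊤ := LinearMap.range_eq_top.2 (LinearMap.surjective hlam_ne)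
  rw [h2] at h1
  simp at h1
  omega

lemma frontier_facets {n : ℕ} {P : Set (Euc n)} (h : IsPolytope P) :
    ∃ 𝓕 : Finset (Set (Euc n)), (∀ F ∈ 𝓕, IsFacetOf P F) ∧ frontier P ⊆ ⋃ F ∈ 𝓕, F := by
  classical
  obtain ⟨hc, hne, m, L, hL, hP⟩ := h
  let good : Finset (Fin m) → Prop := fun I => P = {x | ∀ k ∈ I, 0 ≤ L k x}
  have hg : good Finset.univ := by
    simp only [good, hP]; ext x; simp
  obtain ⟨I, -, hI⟩ := exists_minimal_le_of_wellFoundedLT good Finset.univ hg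
  have hIP : P = {x | ∀ k ∈ I, 0 ≤ L k x} := hI.1
  refine ⟨I.image fun k => {x ∈ P | L k x = 0}, ?_, ?_⟩
  · intro F hF
    obtain ⟨k, hk, rfl⟩ := Finset.mem_image.1 hF
    have hnot : ¬ good (I.erase k) := fun hh => by
      have := hI.2 hh (Finset.erase_subset _ _) hk
      simp at this
    have : ∃ y, (∀ j ∈ I.erase k, 0 ≤ L j y) ∧ y ∉ P := by
      by_contra hcon
      push Not at hcon
      apply hnot
      apply Set.Subset.antisymm
      · intro x hx j hj
        rw [hIP] at hx
        exact hx j (Finset.mem_of_mem_erase hj)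
      · exact fun x hx => hcon x hx
    obtain ⟨y, hy, hyP⟩ := this
    have hy' : ∀ j ∈ I, j ≠ k → 0 ≤ L j y := fun j hj hjk => hy j (Finset.mem_erase.2 ⟨hjk, hj⟩)
    refine facet_of_nonredundant hne I L hL hIP hk hy' ?_
    by_contra hcon
    push Not at hcon
    apply hyP
    rw [hIP]; intro j hj
    by_cases hjk : j = k
    · rw [hjk]; exact hcon
    · exact hy' j hj hjk
  · intro x hx
    have hxP : x ∈ P := hc.isClosed.frontier_subset hx
    by_contra hcon
    simp only [Set.mem_iUnion, Finset.mem_image, not_exists] at hcon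
    have hpos : ∀ k ∈ I, 0 < L k x := by
      intro k hk
      have h0 : 0 ≤ L k x := by rw [hIP] at hxP; exact hxP k hk
      refine lt_of_le_of_ne h0 fun h => hcon _ ⟨k, hk, rfl⟩ ⟨hxP, h.symm⟩
    have : ∀ᶠ y in 𝓝 x, ∀ k ∈ I, 0 < L k y := by
      rw [eventually_all_finset]
      intro j hj
      exact (aff_cont (L j)).continuousAt.eventually (lt_mem_nhds (hpos j hj))
    have hint : x ∈ interior P := by
      rw [mem_interior_iff_mem_nhds]
      filter_upwards [this] with y hy
      rw [hIP]; exact fun k hk => (hy k hk).le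
    exact hx.2 hint

/-- Facets are contained in the frontier. -/
lemma facet_sub_frontier {n : ℕ} {P F : Set (Euc n)} (hF : IsFaceOf P F) :
    F ⊆ frontier P := by
  obtain ⟨ℓ, h0, hpos, rfl⟩ := hF
  intro x hx
  refine ⟨subset_closure hx.1, fun hi => ?_⟩
  exact (aff_pos h0 hpos hi).ne' hx.2

def coneOver {n : ℕ} (z : Euc n) (F : Set (Euc n)) : Set (Euc n) :=
  (fun p : Euc n × ℝ => (1 - p.2) • p.1 + p.2 • z) '' (F ×ˢ Set.Icc (0:ℝ) 1)

lemma face_compact {n : ℕ} {P F : Set (Euc n)} (hP : IsCompact P) (hF : IsFaceOf P F) :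
    IsCompact F := by
  obtain ⟨ℓ, -, -, rfl⟩ := hF
  exact hP.inter_right (isClosed_eq (aff_cont ℓ) continuous_const)

lemma cone_compact {n : ℕ} {z : Euc n} {F : Set (Euc n)} (hF : IsCompact F) :
    IsCompact (coneOver z F) :=
  (hF.prod isCompact_Icc).image (by fun_prop)

lemma cone_core {n : ℕ} {P F : Set (Euc n)} (hP : IsCompact P) {z : Euc n}
    (hz : z ∈ interior P) (hF : IsFacetOf P F) :
    (μH[(n:ℝ) - 1] F < ⊤) ∧ ∃ C : ℝ≥0∞, C ≠ ⊤ ∧ ∀ f : Euc n → ℝ≥0∞, Measurable f →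
      ∫⁻ x in coneOver z F, f x ≤
        C * ∫⁻ τ in Set.Icc (0:ℝ) 1, ∫⁻ y in F, f ((1 - τ) • y + τ • z) ∂μH[(n:ℝ) - 1] := by
  have hFc := face_compact hP hF.1
  rcases F.eq_empty_or_nonempty with rfl | ⟨y0, hy0⟩
  · refine ⟨by simp, 0, by simp, fun f _ => ?_⟩
    simp [coneOver]
  obtain ⟨⟨ℓ, hℓ, hpos, hFe⟩, hdim⟩ := hF
  have hz0 : 0 < ℓ z := aff_pos hℓ hpos hz
  set lam := ℓ.linear with hlam
  have hy00 : ℓ y0 = 0 := by rw [hFe] at hy0; exact hy0.2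
  have hadd : ∀ x v, ℓ (x + v) = ℓ x + lam v := by
    intro x v
    have := ℓ.map_vadd x v
    simp only [vadd_eq_add] at this
    rw [add_comm, this, add_comm]
  set v := z - y0 with hv
  have hlv : lam v = ℓ z := by
    have := hadd y0 v
    rw [hv, add_sub_cancel, hy00] at this
    rw [hv]; linarith
  have hlv0 : lam v ≠ 0 := by rw [hlv]; exact hz0.ne'
  set K := LinearMap.ker lam with hK
  have hlam_ne : lam ≠ 0 := fun h => hlv0 (by rw [h]; simp)
  have hdimK : Module.finrank ℝ K + 1 = n := by
    have h1 := LinearMap.finrank_range_add_finrank_ker lam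
    have h2 : LinearMap.range lam = ⊤ := LinearMap.range_eq_top.2 (LinearMap.surjective hlam_ne)
    rw [h2] at h1
    simp at h1
    rw [hK]; omega
  have hdr : (n:ℝ) - 1 = (Module.finrank ℝ K : ℝ) := by
    have : (n:ℝ) = Module.finrank ℝ K + 1 := by exact_mod_cast hdimK.symm
    linarith
  set κ : Measure K := μH[(n:ℝ) - 1] with hκ
  have : κ.IsAddHaarMeasure := by
    rw [hκ, hdr]; exact isAddHaarMeasure_hausdorffMeasure
  -- the isometric embedding
  set j : K → Euc n := fun k => y0 + k with hj
  have hji : Isometry j := by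
    intro a b
    simp [hj, edist_add_left]
    rfl
  have hmapj : Measure.map j κ = (μH[(n:ℝ) - 1] : Measure (Euc n)).restrict (Set.range j) :=
    hji.map_hausdorffMeasure (Or.inl (by rw [hdr]; positivity))
  have hrange : ∀ y ∈ F, y ∈ Set.range j := by
    intro y hy
    rw [hFe] at hy
    refine ⟨⟨y - y0, ?_⟩, by simp [hj]⟩
    rw [hK, LinearMap.mem_ker]
    have := hadd y0 (y - y0)
    rw [add_sub_cancel, hy.2, hy00] at this
    linarith
  refine ⟨?_, ?_⟩
  · have h1 : IsCompact (j ⁻¹' F) := hji.isClosedEmbedding.isCompact_preimage hFc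
    have h2 := h1.measure_lt_top (μ := κ)
    rw [← Measure.map_apply hji.continuous.measurable hFc.measurableSet, hmapj,
      Measure.restrict_apply hFc.measurableSet, Set.inter_eq_left.2 hrange] at h2
    exact h2
  -- the linear equivalence
  let e0 : (K × ℝ) →ₗ[ℝ] Euc n := K.subtype.coprod (LinearMap.toSpanSingleton ℝ _ v)
  have he0 : ∀ p, e0 p = (p.1 : Euc n) + p.2 • v := by intro p; simp [e0]
  have hlk : ∀ k : K, lam k = 0 := fun k => LinearMap.mem_ker.1 k.2
  have hbij : Function.Bijective e0 := by
    constructor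
    · rw [← LinearMap.ker_eq_bot, LinearMap.ker_eq_bot']
      rintro ⟨k, s⟩ h
      rw [he0] at h
      have h1 := congrArg lam h
      simp only [map_add, map_smul, hlk, smul_eq_mul, map_zero, zero_add] at h1
      have hs : s = 0 := by simpa [hlv0] using h1
      subst hs
      simp at h
      simp [h]
    · intro x
      refine ⟨⟨⟨x - (lam x / lam v) • v, ?_⟩, lam x / lam v⟩, ?_⟩
      · rw [hK, LinearMap.mem_ker, map_sub, map_smul, smul_eq_mul]; field_simp; simp
      · rw [he0]; simp
  let e : (K × ℝ) ≃L[ℝ] Euc n := (LinearEquiv.ofBijective e0 hbij).toContinuousLinearEquiv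
  have he : ∀ p, e p = (p.1 : Euc n) + p.2 • v := he0
  have hem : Measurable e := e.continuous.measurable
  have : (Measure.map e (κ.prod volume)).IsAddHaarMeasure := e.isAddHaarMeasure_map _
  have hvol : (volume : Measure (Euc n)) =
      (volume : Measure (Euc n)).addHaarScalarFactor (Measure.map e (κ.prod volume)) • 
        Measure.map e (κ.prod volume) :=
    Measure.isAddLeftInvariant_eq_smul _ _
  set c : ℝ≥0 := (volume : Measure (Euc n)).addHaarScalarFactor (Measure.map e (κ.prod volume))
  refine ⟨c, by simp, fun f hf => ?_⟩
  have hCm : MeasurableSet (coneOver z F) := (cone_compact hFc).measurableSet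
  set g := (coneOver z F).indicator f with hg
  have hgm : Measurable g := hf.indicator hCm
  have key : ∀ τ : ℝ, τ ≠ 1 → ∫⁻ k, g (y0 + ((k : Euc n) + τ • v)) ∂κ ≤
      (Set.Icc (0:ℝ) 1).indicator (fun τ => ∫⁻ y in F, f ((1 - τ) • y + τ • z) ∂μH[(n:ℝ) - 1]) τ := by
    intro τ hτ1
    -- membership analysis
    have mem : ∀ k : K, y0 + ((k : Euc n) + τ • v) ∈ coneOver z F → τ ∈ Set.Icc (0:ℝ) 1 ∧
        ∃ y ∈ F, y0 + ((k : Euc n) + τ • v) = (1 - τ) • y + τ • z := by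
      rintro k ⟨⟨y, s⟩, ⟨hy, hs⟩, hxy⟩
      have hyF : y ∈ F := hy
      have hℓy : ℓ y = 0 := by rw [hFe] at hyF; exact hyF.2
      have h1 := congrArg ℓ hxy
      simp only at h1
      rw [aff_combo, hℓy, hadd, hy00, map_add, hlk, map_smul, hlv] at h1
      simp at h1
      have hsτ : s = τ := by
        rcases h1 with h1 | h1
        · exact h1
        · exact absurd h1 hz0.ne'
      subst hsτ
      exact ⟨hs, y, hyF, hxy.symm⟩
    by_cases hτ : τ ∈ Set.Icc (0:ℝ) 1
    swap
    · have : ∀ k : K, g (y0 + ((k : Euc n) + τ • v)) = 0 := by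
        intro k
        rw [hg, Set.indicator_of_notMem]
        exact fun h => hτ (mem k h).1
      simp [this]
    rw [Set.indicator_of_mem hτ]
    have hr0 : 0 < 1 - τ := by
      have := lt_of_le_of_ne hτ.2 hτ1
      linarith
    have hr1 : 1 - τ ≤ 1 := by linarith [hτ.1]
    set φ : K → ℝ≥0∞ := fun k => g (y0 + ((k : Euc n) + τ • v)) with hφ
    have hφm : Measurable φ := by
      apply hgm.comp; fun_prop
    have hscale : ∫⁻ k, φ k ∂κ ≤ ∫⁻ k, φ ((1 - τ) • k) ∂κ := by
      have h1 := Measure.map_addHaar_smul κ hr0.ne'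
      have h2 : ∫⁻ k, φ ((1 - τ) • k) ∂κ = ∫⁻ k, φ k ∂(Measure.map ((1 - τ) • ·) κ) :=
        (lintegral_map hφm (by fun_prop)).symm
      rw [h2, h1, lintegral_smul_measure]
      have h3 : (1 : ℝ≥0∞) ≤ ENNReal.ofReal |((1 - τ) ^ Module.finrank ℝ K)⁻¹| := by
        rw [ENNReal.one_le_ofReal, abs_of_pos (by positivity)]
        exact (one_le_inv₀ (by positivity)).2 (pow_le_one₀ hr0.le hr1)
      calc ∫⁻ k, φ k ∂κ = 1 * ∫⁻ k, φ k ∂κ := (one_mul _).symm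
        _ ≤ _ := mul_le_mul' h3 le_rfl
    refine hscale.trans ?_
    set G : Euc n → ℝ≥0∞ := F.indicator (fun y => f ((1 - τ) • y + τ • z)) with hG
    have hGm : Measurable G := by
      refine Measurable.indicator ?_ hFc.measurableSet
      apply hf.comp; fun_prop
    have hle : ∀ k : K, φ ((1 - τ) • k) ≤ G (j k) := by
      intro k
      have hpt : y0 + ((((1 - τ) • k : K) : Euc n) + τ • v) = (1 - τ) • (j k) + τ • z := by
        simp only [hj, hv, Submodule.coe_smul]; module
      by_cases hm : y0 + ((((1 - τ) • k : K) : Euc n) + τ • v) ∈ coneOver z F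
      · obtain ⟨-, y, hy, hxy⟩ := mem _ hm
        have : j k = y := by
          rw [hpt] at hxy
          have h5 := add_right_cancel hxy
          exact smul_right_injective _ hr0.ne' h5
        simp only [hφ, hg, hG]
        rw [Set.indicator_of_mem hm, hpt, this, Set.indicator_of_mem hy]
      · simp only [hφ, hg]
        rw [Set.indicator_of_notMem hm]; exact bot_le
    calc ∫⁻ k, φ ((1 - τ) • k) ∂κ ≤ ∫⁻ k, G (j k) ∂κ := lintegral_mono hle
      _ = ∫⁻ y, G y ∂(Measure.map j κ) := (lintegral_map hGm hji.continuous.measurable).symm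
      _ ≤ ∫⁻ y, G y ∂μH[(n:ℝ) - 1] := by
          rw [hmapj]; exact setLIntegral_le_lintegral _ _
      _ = _ := by rw [hG, lintegral_indicator hFc.measurableSet]
  calc ∫⁻ x in coneOver z F, f x = ∫⁻ x, g x := by rw [hg, lintegral_indicator hCm]
    _ = ∫⁻ x, g (y0 + x) := (lintegral_add_left_eq_self _ _).symm
    _ = c * ∫⁻ x, g (y0 + x) ∂(Measure.map e (κ.prod volume)) := by
        conv_lhs => rw [hvol]
        rw [lintegral_smul_measure]; rfl
    _ = c * ∫⁻ p, g (y0 + e p) ∂(κ.prod volume) := by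
        rw [lintegral_map (by fun_prop) hem]
    _ = c * ∫⁻ τ : ℝ, ∫⁻ k, g (y0 + ((k : Euc n) + τ • v)) ∂κ := by
        rw [lintegral_prod_symm']
        · simp only [he]
        · fun_prop
    _ ≤ c * ∫⁻ τ : ℝ, (Set.Icc (0:ℝ) 1).indicator
          (fun τ => ∫⁻ y in F, f ((1 - τ) • y + τ • z) ∂μH[(n:ℝ) - 1]) τ := by
        refine mul_le_mul' le_rfl (lintegral_mono_ae ?_)
        have : ∀ᵐ τ : ℝ, τ ≠ 1 := by simp [ae_iff]
        filter_upwards [this] with τ hτ using key τ hτ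
    _ = _ := by rw [lintegral_indicator measurableSet_Icc]

lemma facet_sigma {n : ℕ} (S : NSystem n) {z : Euc n} (hz : z ∈ interior S.P)
    {F : Set (Euc n)} (hF : IsFacetOf S.P F) :
    S.σ F < ⊤ ∧ ∃ C : ℝ≥0∞, C ≠ ⊤ ∧ ∀ f : Euc n → ℝ≥0∞, Measurable f →
      ∫⁻ x in coneOver z F, f x ≤
        C * ∫⁻ τ in Set.Icc (0:ℝ) 1, ∫⁻ y in frontier S.P, f ((1 - τ) • y + τ • z) ∂S.σ := by
  obtain ⟨h1, C, hC, h2⟩ := cone_core S.simple.1.1 hz hF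
  obtain ⟨c, hc, hσ⟩ := S.flat_bdry F hF
  have hcne : ENNReal.ofReal c ≠ 0 := by simpa using hc
  have hσF : S.σ F = ENNReal.ofReal c * μH[(n:ℝ) - 1] F := by
    have := congrArg (fun m => m Set.univ) hσ
    simpa using this
  refine ⟨by rw [hσF]; exact ENNReal.mul_lt_top (by simp) h1, C * (ENNReal.ofReal c)⁻¹,
    ENNReal.mul_ne_top hC (ENNReal.inv_ne_top.2 hcne), fun f hf => ?_⟩
  refine (h2 f hf).trans ?_
  rw [mul_assoc]
  gcongr
  rw [← lintegral_const_mul' _ _ (ENNReal.inv_ne_top.2 hcne)]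
  refine lintegral_mono fun τ => ?_
  have e : (μH[(n:ℝ) - 1] : Measure (Euc n)).restrict F =
      (ENNReal.ofReal c)⁻¹ • S.σ.restrict F := by
    rw [hσ, smul_smul, ENNReal.inv_mul_cancel hcne (by simp), one_smul]
  rw [e, lintegral_smul_measure, smul_eq_mul]
  gcongr
  exact facet_sub_frontier hF.1

lemma sigma_lt_top {n : ℕ} (S : NSystem n) : S.σ (frontier S.P) < ⊤ := by
  obtain ⟨𝓕, h1, h2⟩ := frontier_facets S.simple.1
  obtain ⟨z, hz⟩ := S.simple.1.2.1
  refine (measure_mono h2).trans_lt ?_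
  refine (measure_biUnion_finset_le _ _).trans_lt ?_
  exact ENNReal.sum_lt_top.2 fun F hF => (facet_sigma S hz (h1 F hF)).1

lemma radial_exists {n : ℕ} {P : Set (Euc n)} (hP : IsCompact P) {z x : Euc n}
    (hx : x ∈ P) (hxz : x ≠ z) :
    ∃ y ∈ frontier P, ∃ τ ∈ Set.Icc (0:ℝ) 1, x = (1 - τ) • y + τ • z := by
  set A : Set ℝ := {s | 1 ≤ s ∧ z + s • (x - z) ∈ P} with hA
  have hcont : Continuous (fun s : ℝ => z + s • (x - z)) := by fun_prop
  have hAc : IsClosed A := isClosed_Ici.inter (hP.isClosed.preimage hcont)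
  have hA1 : (1:ℝ) ∈ A := ⟨le_rfl, by simpa using hx⟩
  have hnz : 0 < ‖x - z‖ := norm_pos_iff.2 (sub_ne_zero.2 hxz)
  have hAb : BddAbove A := by
    obtain ⟨R, hR⟩ := hP.isBounded.exists_norm_le
    refine ⟨(R + ‖z‖) / ‖x - z‖, fun s hs => ?_⟩
    rw [le_div_iff₀ hnz]
    have h1 := hR _ hs.2
    have h2 : s * ‖x - z‖ = ‖s • (x - z)‖ := by
      rw [norm_smul, Real.norm_eq_abs, abs_of_nonneg (by linarith [hs.1])]
    rw [h2]
    calc ‖s • (x - z)‖ = ‖(z + s • (x - z)) - z‖ := by congr 1; abel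
      _ ≤ ‖z + s • (x - z)‖ + ‖z‖ := norm_sub_le _ _
      _ ≤ _ := by linarith
  have hsup := hAc.csSup_mem ⟨1, hA1⟩ hAb
  set s := sSup A with hs
  have hs1 : 1 ≤ s := hsup.1
  refine ⟨z + s • (x - z), ⟨subset_closure hsup.2, fun hi => ?_⟩, 1 - s⁻¹, ⟨?_, ?_⟩, ?_⟩
  · have h1 : ∀ᶠ t in 𝓝[>] s, z + t • (x - z) ∈ P :=
      (hcont.continuousAt.tendsto.mono_left nhdsWithin_le_nhds).eventually
        (mem_interior_iff_mem_nhds.1 hi)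
    obtain ⟨t, ht, hst⟩ := (h1.and self_mem_nhdsWithin).exists
    have hst : s < t := hst
    have : t ≤ s := le_csSup hAb ⟨by linarith, ht⟩
    linarith
  · have := inv_le_one_of_one_le₀ hs1
    linarith
  · have : 0 < s⁻¹ := by positivity
    linarith
  · have : s ≠ 0 := by positivity
    rw [show 1 - (1 - s⁻¹) = s⁻¹ by ring, smul_add, smul_smul, inv_mul_cancel₀ this]
    module

lemma polar {n : ℕ} (hn : n ≠ 0) (S : NSystem n) {z : Euc n} (hz : z ∈ interior S.P) :
    ∃ C : ℝ≥0∞, C ≠ ⊤ ∧ ∀ f : Euc n → ℝ≥0∞, Measurable f →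
      ∫⁻ x in S.P, f x ≤
        C * ∫⁻ τ in Set.Icc (0:ℝ) 1, ∫⁻ y in frontier S.P, f ((1 - τ) • y + τ • z) ∂S.σ := by
  classical
  obtain ⟨𝓕, h1, h2⟩ := frontier_facets S.simple.1
  have hex : ∀ F : Set (Euc n), ∃ C : ℝ≥0∞, C ≠ ⊤ ∧ (F ∈ 𝓕 → ∀ f : Euc n → ℝ≥0∞, Measurable f →
      ∫⁻ x in coneOver z F, f x ≤
        C * ∫⁻ τ in Set.Icc (0:ℝ) 1, ∫⁻ y in frontier S.P, f ((1 - τ) • y + τ • z) ∂S.σ) := by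
    intro F
    by_cases hF : F ∈ 𝓕
    · obtain ⟨-, C, hC, h⟩ := facet_sigma S hz (h1 F hF)
      exact ⟨C, hC, fun _ => h⟩
    · exact ⟨0, by simp, fun h => absurd h hF⟩
  choose C hC hCf using hex
  refine ⟨∑ F ∈ 𝓕, C F, (ENNReal.sum_lt_top.2 fun F _ => (hC F).lt_top).ne, fun f hf => ?_⟩
  have hun : ∀ 𝓖 : Finset (Set (Euc n)), ∫⁻ x in ⋃ F ∈ 𝓖, coneOver z F, f x ≤
      ∑ F ∈ 𝓖, ∫⁻ x in coneOver z F, f x := by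
    intro 𝓖
    induction 𝓖 using Finset.induction_on with
    | empty => simp
    | insert a s ha ih =>
      rw [Finset.set_biUnion_insert, Finset.sum_insert ha]
      exact (lintegral_union_le _ _ _).trans (by gcongr)
  have hcov : S.P \ {z} ⊆ ⋃ F ∈ 𝓕, coneOver z F := by
    rintro x ⟨hx, hxz⟩
    obtain ⟨y, hy, τ, hτ, rfl⟩ := radial_exists S.simple.1.1 hx (by simpa using hxz)
    obtain ⟨F, hF, hyF⟩ := Set.mem_iUnion₂.1 (h2 hy)
    exact Set.mem_iUnion₂.2 ⟨F, hF, ⟨(y, τ), ⟨hyF, hτ⟩, rfl⟩⟩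
  have : Nonempty (Fin n) := ⟨⟨0, Nat.pos_of_ne_zero hn⟩⟩
  have hnull : (volume : Measure (Euc n)) {z} = 0 := measure_singleton z
  calc ∫⁻ x in S.P, f x = ∫⁻ x in S.P \ {z}, f x := by
        refine setLIntegral_congr ?_
        exact (sdiff_null_ae_eq_self hnull).symm
    _ ≤ ∫⁻ x in ⋃ F ∈ 𝓕, coneOver z F, f x := lintegral_mono_set hcov
    _ ≤ ∑ F ∈ 𝓕, ∫⁻ x in coneOver z F, f x := hun 𝓕
    _ ≤ ∑ F ∈ 𝓕, C F * ∫⁻ τ in Set.Icc (0:ℝ) 1, ∫⁻ y in frontier S.P,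
          f ((1 - τ) • y + τ • z) ∂S.σ := Finset.sum_le_sum fun F hF => hCf F hF f hf
    _ = _ := by rw [Finset.sum_mul]

lemma NSystem.closed {n : ℕ} (S : NSystem n) : IsClosed S.P := S.simple.1.1.isClosed
lemma NSystem.convex {n : ℕ} (S : NSystem n) : Convex ℝ S.P := polytope_convex S.simple.1
lemma NSystem.frontier_sub {n : ℕ} (S : NSystem n) : frontier S.P ⊆ S.P := S.closed.frontier_subset
lemma NSystem.volP_lt {n : ℕ} (S : NSystem n) : volume S.P < ⊤ := S.simple.1.1.measure_lt_top
lemma NSystem.volP_pos {n : ℕ} (S : NSystem n) : volume S.P ≠ 0 :=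
  (Measure.measure_pos_of_nonempty_interior _ S.simple.1.2.1).ne'

/-- integrals against `μ` are multiples of Lebesgue integrals -/
lemma NSystem.mu_eq {n : ℕ} (S : NSystem n) : ∃ c : ℝ≥0∞, c ≠ 0 ∧ c ≠ ⊤ ∧
    S.μ.restrict S.P = c • volume.restrict S.P ∧ S.μ S.P = c * volume S.P := by
  obtain ⟨c, hc, h⟩ := S.flat
  have e : S.μ.restrict S.P = ENNReal.ofReal c • volume.restrict S.P := by
    rw [h, Measure.restrict_smul, Measure.restrict_restrict S.closed.measurableSet, Set.inter_self]
  refine ⟨ENNReal.ofReal c, by simpa using hc, by simp, e, ?_⟩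
  have := congrArg (fun m => m Set.univ) e
  simpa using this

lemma NSystem.muP_ne_top {n : ℕ} (S : NSystem n) : S.μ S.P ≠ ⊤ := by
  obtain ⟨c, h0, h1, -, h⟩ := S.mu_eq
  rw [h]; exact ENNReal.mul_ne_top h1 S.volP_lt.ne

lemma NSystem.muP_ne_zero {n : ℕ} (S : NSystem n) : S.μ S.P ≠ 0 := by
  obtain ⟨c, h0, h1, -, h⟩ := S.mu_eq
  rw [h]; exact mul_ne_zero h0 S.volP_pos

lemma MExp.vol {n : ℕ} {S : NSystem n} {p : ℝ} {u : Euc n → ℝ≥0∞} (hu : u ∈ MExp S p) :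
    ∫⁻ x in S.P, u x = volume S.P := by
  obtain ⟨c, h0, h1, e, h⟩ := S.mu_eq
  have := hu.2.2.2.1
  rw [e, h, lintegral_smul_measure, smul_eq_mul] at this
  exact (ENNReal.mul_right_inj h0 h1).1 this

lemma MExp.int_bound {n : ℕ} {S : NSystem n} {p : ℝ} {u : Euc n → ℝ≥0∞} (hu : u ∈ MExp S p)
    {x : Euc n} {r : ℝ} (hr : 0 < r) (hb : Metric.ball x r ⊆ S.P) :
    u x ≤ volume S.P / volume (Metric.ball x r) := by
  rw [ENNReal.le_div_iff_mul_le (Or.inl (Metric.measure_ball_pos _ _ hr).ne')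
    (Or.inl measure_ball_lt_top.ne), mul_comm]
  refine (convex_avg S.closed hu.1 hu.2.2.1.convexFn hb).trans ?_
  rw [← MExp.vol hu]
  exact lintegral_mono_set hb

lemma NSystem.ae_interior {n : ℕ} (S : NSystem n) :
    ∀ᵐ x ∂(volume.restrict S.P), x ∈ interior S.P := by
  have h0 : volume (frontier S.P) = 0 := S.convex.addHaar_frontier _
  rw [ae_restrict_iff' S.closed.measurableSet, ae_iff]
  refine measure_mono_null (fun x hx => ?_) h0
  simp only [Set.mem_ofPred_eq, Classical.not_imp] at hx
  exact ⟨subset_closure hx.1, hx.2⟩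

lemma ball_combo {n : ℕ} {P : Set (Euc n)} (hP : Convex ℝ P) {y z : Euc n} {r τ : ℝ}
    (hy : y ∈ P) (hz : Metric.ball z r ⊆ P) (h0 : 0 < τ) (h1 : τ ≤ 1) :
    Metric.ball ((1 - τ) • y + τ • z) (τ * r) ⊆ P := by
  intro w hw
  have : w = (1 - τ) • y + τ • (z + τ⁻¹ • (w - ((1 - τ) • y + τ • z))) := by
    rw [smul_add, smul_smul, mul_inv_cancel₀ h0.ne']; module
  rw [this]
  refine hP hy (hz ?_) (by linarith) h0.le (by ring)
  rw [Metric.mem_ball, dist_eq_norm, add_sub_cancel_left, norm_smul, Real.norm_eq_abs,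
    abs_of_pos (by positivity), inv_mul_lt_iff₀ h0]
  rwa [Metric.mem_ball, dist_eq_norm] at hw

lemma lint_rpow {r a : ℝ} (hr : 0 < r) (ha1 : a < 1) :
    ∫⁻ τ in Set.Icc (0:ℝ) 1, (ENNReal.ofReal (τ * r)) ^ (-a) < ⊤ := by
  have hint : IntegrableOn (fun τ : ℝ => τ ^ (-a) * r ^ (-a)) (Set.Ioc 0 1) := by
    have := intervalIntegral.intervalIntegrable_rpow' (a := 0) (b := 1) (r := -a) (by linarith)
    rw [intervalIntegrable_iff_integrableOn_Ioc_of_le (by norm_num)] at this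
    exact this.mul_const _
  have h2 := hint.2
  rw [hasFiniteIntegral_iff_ofReal] at h2
  · rw [setLIntegral_congr (Ioc_ae_eq_Icc (μ := volume) (a := (0:ℝ)) (b := 1)).symm]
    refine lt_of_le_of_lt (le_of_eq ?_) h2
    refine setLIntegral_congr_fun measurableSet_Ioc fun τ hτ => ?_
    rw [ENNReal.ofReal_rpow_of_pos (mul_pos hτ.1 hr), Real.mul_rpow hτ.1.le hr.le]
  · filter_upwards [ae_restrict_mem measurableSet_Ioc] with τ hτ
    have := hτ.1
    positivity

lemma Lq_bound {n : ℕ} (S : NSystem n) {q : ℝ} (hq : 1 ≤ q) (hqn : (q - 1) * ((n:ℝ) - 1) < 1)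
    {C0 : ℝ≥0∞} (hC0 : C0 ≠ ⊤) : ∃ C : ℝ≥0∞, C ≠ ⊤ ∧ ∀ u ∈ MExp S 1, Upf S u ≤ C0 →
      ∫⁻ x in S.P, u x ^ q ≤ C := by
  obtain ⟨z, hz⟩ := S.simple.1.2.1
  obtain ⟨r, hr, hball⟩ := Metric.isOpen_iff.1 isOpen_interior z hz
  have hballP : Metric.ball z r ⊆ S.P := hball.trans interior_subset
  set B := volume S.P / volume (Metric.ball z r) with hB
  have hBt : B ≠ ⊤ := ENNReal.div_ne_top S.volP_lt.ne (Metric.measure_ball_pos _ _ hr).ne'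
  rcases eq_or_ne n 0 with hn0 | hn0
  · subst hn0
    refine ⟨B ^ q * volume S.P, ENNReal.mul_ne_top
      (ENNReal.rpow_ne_top_of_nonneg (by linarith) hBt) S.volP_lt.ne, fun u hu _ => ?_⟩
    rw [← setLIntegral_const]
    refine lintegral_mono fun x => ENNReal.rpow_le_rpow ?_ (by linarith)
    rw [Subsingleton.elim x z]
    exact MExp.int_bound hu hr hballP
  obtain ⟨Cp, hCp, hpolar⟩ := polar hn0 S hz
  set W := S.μ S.P * C0 + B * S.σ (frontier S.P) with hW
  have hWt : W ≠ ⊤ := ENNReal.add_ne_top.2 ⟨ENNReal.mul_ne_top S.muP_ne_top hC0,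
    ENNReal.mul_ne_top hBt (sigma_lt_top S).ne⟩
  set b1 := volume (Metric.ball (0 : Euc n) 1) with hb1
  have hb10 : b1 ≠ 0 := (Metric.measure_ball_pos _ _ one_pos).ne'
  have hb1t : b1 ≠ ⊤ := measure_ball_lt_top.ne
  set Q := Cp * (ENNReal.ofReal (2 / r) * W) / b1 with hQ
  have hQt : Q ≠ ⊤ := ENNReal.div_ne_top (ENNReal.mul_ne_top hCp
    (ENNReal.mul_ne_top (by simp) hWt)) hb10
  set a := ((n:ℝ) - 1) * (q - 1) with ha
  set D := ∫⁻ τ in Set.Icc (0:ℝ) 1, (ENNReal.ofReal (τ * r)) ^ (-a) with hD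
  have hDt : D ≠ ⊤ := (lint_rpow hr (by rw [ha]; linarith)).ne
  refine ⟨Q ^ (q - 1) * (Cp * (D * W)), ENNReal.mul_ne_top
    (ENNReal.rpow_ne_top_of_nonneg (by linarith) hQt) (ENNReal.mul_ne_top hCp
      (ENNReal.mul_ne_top hDt hWt)), fun u hu hU => ?_⟩
  have hn1 : (1:ℝ) ≤ n := by exact_mod_cast Nat.one_le_iff_ne_zero.2 hn0
  have ha0 : 0 ≤ a := mul_nonneg (by linarith) (by linarith)
  have huz : u z ≤ B := MExp.int_bound hu hr hballP
  have hfm : MeasurableSet (frontier S.P) := isClosed_frontier.measurableSet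
  have huσ : AEMeasurable u (S.σ.restrict (frontier S.P)) :=
    lsc_aemeasurable S.closed hu.1 hfm S.frontier_sub _
  have hint : ∫⁻ y in frontier S.P, (u y + u z) ∂S.σ ≤ W := by
    rw [lintegral_add_left' huσ, setLIntegral_const, hW]
    gcongr
    have := mul_le_mul_right hU (S.μ S.P)
    rwa [Upf, ← mul_assoc, ENNReal.mul_inv_cancel S.muP_ne_zero S.muP_ne_top, one_mul] at this
  set d : Euc n → ℝ := fun x => Metric.infDist x (interior S.P)ᶜ with hd
  have hdc : Continuous d := Metric.continuous_infDist_pt _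
  set v := S.P.indicator u with hv
  have hvm : Measurable v := lsc_measurable S.closed hu.1
  have hyP : ∀ y ∈ frontier S.P, ∀ τ ∈ Set.Icc (0:ℝ) 1, v ((1 - τ) • y + τ • z) ≤ u y + u z := by
    intro y hy τ hτ
    have hyP := S.frontier_sub hy
    have hzP := interior_subset hz
    have hm : (1 - τ) • y + τ • z ∈ S.P :=
      S.convex hyP hzP (by linarith [hτ.2]) hτ.1 (by ring)
    rw [hv, Set.indicator_of_mem hm]
    refine (hu.2.2.1.convexFn hyP hzP hτ.1 hτ.2).trans ?_
    refine add_le_add ?_ ?_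
    · exact mul_le_of_le_one_left' (ENNReal.ofReal_le_one.2 (by linarith [hτ.1]))
    · exact mul_le_of_le_one_left' (ENNReal.ofReal_le_one.2 hτ.2)
  have hdτ : ∀ y ∈ frontier S.P, ∀ τ ∈ Set.Icc (0:ℝ) 1, τ * r ≤ d ((1 - τ) • y + τ • z) := by
    intro y hy τ hτ
    rcases hτ.1.eq_or_lt with h0 | h0
    · rw [← h0, zero_mul]; exact Metric.infDist_nonneg
    refine (Metric.le_infDist ⟨y, hy.2⟩).2 fun w hw => ?_
    by_contra hcon
    push Not at hcon
    have hsub := ball_combo S.convex (S.frontier_sub hy) hballP h0 hτ.2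
    exact hw (interior_maximal hsub Metric.isOpen_ball (by rwa [Metric.mem_ball, dist_comm]))
  -- pointwise bound
  have hpt : ∀ x, 0 < d x → u x ≤ Q * (ENNReal.ofReal (d x)) ^ (-((n:ℝ) - 1)) := by
    intro x hx
    have hbx : Metric.ball x (d x) ⊆ S.P := by
      intro w hw
      by_contra hcon
      have : d x ≤ dist x w := Metric.infDist_le_dist_of_mem (fun h => hcon (interior_subset h))
      rw [Metric.mem_ball, dist_comm] at hw
      linarith
    have h1 := convex_avg S.closed hu.1 hu.2.2.1.convexFn hbx
    have h2 : ∫⁻ y in Metric.ball x (d x), u y ≤ Cp * (ENNReal.ofReal (2 * d x / r) * W) := by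
      have hfmeas : Measurable ((Metric.ball x (d x)).indicator v) := hvm.indicator measurableSet_ball
      have h3 := hpolar _ hfmeas
      have h4 : ∫⁻ y in S.P, (Metric.ball x (d x)).indicator v y = ∫⁻ y in Metric.ball x (d x), u y := by
        rw [lintegral_indicator measurableSet_ball, Measure.restrict_restrict measurableSet_ball,
          Set.inter_eq_left.2 hbx]
        refine setLIntegral_congr_fun measurableSet_ball fun y hy => ?_
        simp only [hv]
        rw [Set.indicator_of_mem (hbx hy)]
      rw [h4] at h3
      refine h3.trans ?_
      gcongr
      calc ∫⁻ τ in Set.Icc (0:ℝ) 1, ∫⁻ y in frontier S.P,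
            (Metric.ball x (d x)).indicator v ((1 - τ) • y + τ • z) ∂S.σ
          ≤ ∫⁻ τ in Set.Icc (0:ℝ) 1, (Set.Icc 0 (2 * d x / r)).indicator (fun _ => W) τ := by
            refine setLIntegral_mono' measurableSet_Icc fun τ hτ => ?_
            by_cases hτ2 : τ ∈ Set.Icc 0 (2 * d x / r)
            · rw [Set.indicator_of_mem hτ2]
              refine le_trans (setLIntegral_mono' hfm fun y hy => ?_) hint
              exact (Set.indicator_le_self _ _ _).trans (hyP y hy τ hτ)
            · rw [Set.indicator_of_notMem hτ2, nonpos_iff_eq_zero]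
              rw [← nonpos_iff_eq_zero, ← lintegral_zero (μ := S.σ.restrict (frontier S.P))]
              refine setLIntegral_mono' hfm fun y hy => ?_
              rw [Set.indicator_of_notMem]
              intro hmem
              apply hτ2
              refine ⟨hτ.1, ?_⟩
              rw [le_div_iff₀ hr]
              refine (hdτ y hy τ hτ).trans ?_
              have := Metric.infDist_le_infDist_add_dist (s := (interior S.P)ᶜ)
                (x := (1 - τ) • y + τ • z) (y := x)
              rw [Metric.mem_ball] at hmem
              simp only [hd] at hmem ⊢
              linarith
        _ ≤ ∫⁻ τ : ℝ, (Set.Icc 0 (2 * d x / r)).indicator (fun _ => W) τ :=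
            setLIntegral_le_lintegral _ _
        _ = _ := by
            rw [lintegral_indicator measurableSet_Icc, setLIntegral_const, Real.volume_Icc, sub_zero,
              mul_comm]
    set δ := ENNReal.ofReal (d x) with hδ
    have hδ0 : δ ≠ 0 := by simpa [hδ] using hx
    have hδt : δ ≠ ⊤ := by simp [hδ]
    have hvolb : volume (Metric.ball x (d x)) = δ ^ (n:ℝ) * b1 := by
      rw [Measure.addHaar_ball_of_pos _ _ hx, finrank_euclideanSpace, Fintype.card_fin, hb1,
        ENNReal.ofReal_pow hx.le, ENNReal.rpow_natCast]
    have h5 := h1.trans h2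
    rw [hvolb] at h5
    have e1 : ENNReal.ofReal (2 * d x / r) = ENNReal.ofReal (2 / r) * δ := by
      rw [hδ, ← ENNReal.ofReal_mul (by positivity)]; congr 1; ring
    rw [e1] at h5
    have h6 : u x = (δ ^ (n:ℝ))⁻¹ * b1⁻¹ * (δ ^ (n:ℝ) * b1 * u x) := by
      have t1 : δ ^ (n:ℝ) ≠ 0 := by simp [ENNReal.rpow_eq_zero_iff, hδ0, hδt]
      have t2 : δ ^ (n:ℝ) ≠ ⊤ := ENNReal.rpow_ne_top_of_nonneg (by positivity) hδt
      calc u x = ((δ ^ (n:ℝ))⁻¹ * δ ^ (n:ℝ)) * (b1⁻¹ * b1) * u x := by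
            rw [ENNReal.inv_mul_cancel t1 t2, ENNReal.inv_mul_cancel hb10 hb1t, one_mul, one_mul]
        _ = _ := by ring
    rw [h6]
    calc _ ≤ (δ ^ (n:ℝ))⁻¹ * b1⁻¹ * (Cp * (ENNReal.ofReal (2 / r) * δ * W)) := by gcongr
      _ = Q * ((δ ^ (n:ℝ))⁻¹ * δ) := by
          simp only [hQ]
          generalize ENNReal.ofReal (2 / r) = e2
          generalize (δ ^ (n:ℝ))⁻¹ = e3
          rw [ENNReal.div_eq_inv_mul]; ring
      _ = Q * δ ^ (-((n:ℝ) - 1)) := by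
          congr 1
          rw [← ENNReal.rpow_neg]
          nth_rewrite 2 [← ENNReal.rpow_one δ]
          rw [← ENNReal.rpow_add _ _ hδ0 hδt]
          congr 1; ring
  -- conclusion
  have hae := S.ae_interior
  have hne : ((interior S.P)ᶜ).Nonempty := by
    have : Nonempty (Fin n) := ⟨⟨0, Nat.pos_of_ne_zero hn0⟩⟩
    have hnP : S.P ≠ Set.univ := S.simple.1.1.ne_univ
    obtain ⟨w, hw⟩ := (Set.ne_univ_iff_exists_notMem _).1 hnP
    exact ⟨w, fun h => hw (interior_subset h)⟩
  set f : Euc n → ℝ≥0∞ := fun x => v x * (ENNReal.ofReal (d x)) ^ (-a) with hf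
  have hfmeas : Measurable f := by
    refine hvm.mul (Measurable.pow_const ?_ _)
    exact ENNReal.measurable_ofReal.comp hdc.measurable
  have hstep : ∫⁻ x in S.P, u x ^ q ≤ Q ^ (q - 1) * ∫⁻ x in S.P, f x := by
    rw [← lintegral_const_mul _ hfmeas]
    refine lintegral_mono_ae ?_
    filter_upwards [hae] with x hx
    have hdx : 0 < d x := (isOpen_interior.isClosed_compl.notMem_iff_infDist_pos hne).1
      (by simpa using hx)
    have e : u x ^ q = u x * u x ^ (q - 1) := by
      nth_rewrite 2 [← ENNReal.rpow_one (u x)]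
      rw [← ENNReal.rpow_add_of_nonneg _ _ (by norm_num) (by linarith)]; congr 1; ring
    have h1 : u x ^ (q - 1) ≤ Q ^ (q - 1) * (ENNReal.ofReal (d x)) ^ (-a) := by
      refine (ENNReal.rpow_le_rpow (hpt x hdx) (by linarith)).trans (le_of_eq ?_)
      rw [ENNReal.mul_rpow_of_nonneg _ _ (by linarith), ← ENNReal.rpow_mul]
      congr 2; rw [ha]; ring
    rw [e, hf]
    simp only [hv]
    rw [Set.indicator_of_mem (interior_subset hx)]
    calc _ ≤ u x * (Q ^ (q - 1) * (ENNReal.ofReal (d x)) ^ (-a)) := by gcongr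
      _ = _ := by ring
  refine hstep.trans ?_
  gcongr
  refine (hpolar f hfmeas).trans ?_
  gcongr
  rw [hD, ← lintegral_mul_const' _ _ hWt]
  refine setLIntegral_mono' measurableSet_Icc fun τ hτ => ?_
  calc _ ≤ ∫⁻ y in frontier S.P, (ENNReal.ofReal (τ * r)) ^ (-a) * (u y + u z) ∂S.σ := by
        refine setLIntegral_mono' hfm fun y hy => ?_
        refine (mul_comm _ _).trans_le (mul_le_mul' ?_ (hyP y hy τ hτ))
        rw [ENNReal.rpow_neg, ENNReal.rpow_neg]
        exact ENNReal.inv_le_inv.2 (ENNReal.rpow_le_rpow (ENNReal.ofReal_le_ofReal (hdτ y hy τ hτ)) ha0)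
    _ = (ENNReal.ofReal (τ * r)) ^ (-a) * ∫⁻ y in frontier S.P, (u y + u z) ∂S.σ :=
        lintegral_const_mul'' _ (huσ.add aemeasurable_const)
    _ ≤ _ := by gcongr

lemma conv_cont {n : ℕ} {O : Set (Euc n)} (hO : IsOpen O) (hc : Convex ℝ O)
    {g : Euc n → ℝ≥0∞} (hg : ConvexFnOn O g) (hf : ∀ x ∈ O, g x ≠ ⊤) : ContinuousOn g O := by
  have h1 : ConvexOn ℝ O (fun x => (g x).toReal) := by
    refine ⟨hc, fun x hx y hy a b ha hb hab => ?_⟩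
    have hb1 : b ≤ 1 := by linarith
    have ea : a = 1 - b := by linarith
    have h := hg hx hy hb hb1
    rw [← ea] at h
    have t1 : ENNReal.ofReal a * g x ≠ ⊤ := ENNReal.mul_ne_top (by simp) (hf x hx)
    have t2 : ENNReal.ofReal b * g y ≠ ⊤ := ENNReal.mul_ne_top (by simp) (hf y hy)
    have h' := ENNReal.toReal_mono (ENNReal.add_ne_top.2 ⟨t1, t2⟩) h
    rw [ENNReal.toReal_add t1 t2, ENNReal.toReal_mul, ENNReal.toReal_mul,
      ENNReal.toReal_ofReal ha, ENNReal.toReal_ofReal hb] at h'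
    simpa using h'
  have h2 := h1.continuousOn hO
  refine (ENNReal.continuous_ofReal.comp_continuousOn h2).congr fun x hx => ?_
  exact (ENNReal.ofReal_toReal (hf x hx)).symm

lemma logconv_lim {n : ℕ} {P O : Set (Euc n)} (hO : Convex ℝ O) (hOP : O ⊆ P)
    {v : ℕ → Euc n → ℝ≥0∞} (hv : ∀ k, LogConvexOn P (v k)) {l : Filter ℕ} [l.NeBot]
    {g : Euc n → ℝ≥0∞} (hg : ∀ x ∈ O, Tendsto (fun k => v k x) l (𝓝 (g x)))
    (hf : ∀ x ∈ O, g x ≠ ⊤) : LogConvexOn O g := by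
  intro x hx y hy t h0 h1
  have hm : (1 - t) • x + t • y ∈ O := hO hx hy (by linarith) h0 (by ring)
  refine le_of_tendsto_of_tendsto' (hg _ hm) ?_ (fun k => hv k (hOP hx) (hOP hy) h0 h1)
  refine ENNReal.Tendsto.mul ?_ (Or.inr ?_) ?_ (Or.inr ?_)
  · exact ((ENNReal.continuous_rpow_const (y := 1 - t)).tendsto _).comp (hg x hx)
  · exact ENNReal.rpow_ne_top_of_nonneg h0 (hf y hy)
  · exact ((ENNReal.continuous_rpow_const (y := t)).tendsto _).comp (hg y hy)
  · exact ENNReal.rpow_ne_top_of_nonneg (by linarith) (hf x hx)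

lemma lim_ne_top {n : ℕ} {S : NSystem n} {v : ℕ → Euc n → ℝ≥0∞} (hv : ∀ k, v k ∈ MExp S 1)
    {l : Filter ℕ} [l.NeBot] {g : Euc n → ℝ≥0∞} {x : Euc n} (hx : x ∈ interior S.P)
    (hg : Tendsto (fun k => v k x) l (𝓝 (g x))) : g x ≠ ⊤ := by
  obtain ⟨r, hr, hball⟩ := Metric.isOpen_iff.1 isOpen_interior x hx
  have hballP : Metric.ball x r ⊆ S.P := hball.trans interior_subset
  refine ne_top_of_le_ne_top (ENNReal.div_ne_top S.volP_lt.ne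
    (Metric.measure_ball_pos volume x hr).ne') (le_of_tendsto' hg fun k => ?_)
  exact MExp.int_bound (hv k) hr hballP

lemma subseq_conv {n : ℕ} {S : NSystem n} {u : ℕ → Euc n → ℝ≥0∞} (hu : ∀ k, u k ∈ MExp S 1) :
    ∃ φ : ℕ → ℕ, StrictMono φ ∧ ∃ g : Euc n → ℝ≥0∞, (∀ x ∈ interior S.P,
      Tendsto (fun k => u (φ k) x) atTop (𝓝 (g x))) := by
  obtain ⟨a, φ, hφ, hlim⟩ := CompactSpace.tendsto_subseq
    (fun k => fun i : ℕ => u k (TopologicalSpace.denseSeq (Euc n) i))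
  rw [tendsto_pi_nhds] at hlim
  refine ⟨φ, hφ, ?_⟩
  have hc : Convex ℝ (interior S.P) := S.convex.interior
  have key : ∀ U : Ultrafilter ℕ, ∃ g : Euc n → ℝ≥0∞, ∀ x,
      Tendsto (fun k => u (φ k) x) U (𝓝 (g x)) := by
    intro U
    have : ∀ x, ∃ y, Tendsto (fun k => u (φ k) x) U (𝓝 y) := by
      intro x
      obtain ⟨y, -, hy⟩ := isCompact_univ.ultrafilter_le_nhds (U.map (fun k => u (φ k) x))
        (by simp)
      exact ⟨y, hy⟩
    choose g hg using this
    exact ⟨g, hg⟩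
  choose G hG using key
  have hcont : ∀ U : Ultrafilter ℕ, ContinuousOn (G U) (interior S.P) := by
    intro U
    have hf : ∀ x ∈ interior S.P, G U x ≠ ⊤ := fun x hx =>
      lim_ne_top (fun k => hu (φ k)) hx (hG U x)
    exact conv_cont isOpen_interior hc (logconv_lim hc interior_subset
      (fun k => (hu (φ k)).2.2.1) (fun x _ => hG U x) hf).convexFn hf
  obtain ⟨U0⟩ : Nonempty {U : Ultrafilter ℕ // (U : Filter ℕ) ≤ atTop} :=
    ⟨Ultrafilter.of atTop, Ultrafilter.of_le _⟩
  refine ⟨G U0, fun x hx => ?_⟩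
  rw [tendsto_iff_ultrafilter]
  intro U hU
  have heq : G U x = G U0.1 x := by
    have hcl : x ∈ closure (interior S.P ∩ Set.range (TopologicalSpace.denseSeq (Euc n))) := by
      have hd : Dense (Set.range (TopologicalSpace.denseSeq (Euc n))) :=
        TopologicalSpace.denseRange_denseSeq _
      exact hd.open_subset_closure_inter isOpen_interior hx
    by_contra hne
    have hW : {y | G U y ≠ G U0.1 y} ∈ 𝓝 x := by
      have c1 := (hcont U).continuousAt (isOpen_interior.mem_nhds hx)
      have c2 := (hcont U0.1).continuousAt (isOpen_interior.mem_nhds hx)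
      exact ((c1.prodMk c2).eventually ((isClosed_diagonal.isOpen_compl).mem_nhds hne))
    obtain ⟨y, hy1, hy2, ⟨i, rfl⟩⟩ := mem_closure_iff_nhds.1 hcl _ hW
    exact hy1 ((tendsto_nhds_unique (hG U _) ((hlim i).mono_left hU)).trans
      (tendsto_nhds_unique (hG U0.1 _) ((hlim i).mono_left U0.2)).symm)
  rw [← heq]
  exact hG U x

lemma supporting {n : ℕ} {O : Set (Euc n)} (hO : IsOpen O) {h : Euc n → ℝ} (hh : ConvexOn ℝ O h)
    {x0 : Euc n} (hx0 : x0 ∈ O) : ∃ (f : Euc n →L[ℝ] ℝ) (c : ℝ), (∀ y ∈ O, f y + c ≤ h y) ∧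
      f x0 + c = h x0 := by
  have hcont := hh.continuousOn hO
  have hopen : IsOpen {p : Euc n × ℝ | p.1 ∈ O ∧ h p.1 < p.2} := by
    rw [isOpen_iff_mem_nhds]
    rintro ⟨y, s⟩ ⟨hy, hs⟩
    have c1 : ContinuousAt (fun p : Euc n × ℝ => h p.1) (y, s) :=
      ContinuousAt.comp (x := ((y, s) : Euc n × ℝ)) (g := h) (hcont.continuousAt (hO.mem_nhds hy)) continuousAt_fst
    have c2 : ContinuousAt (fun p : Euc n × ℝ => p.2) (y, s) := continuousAt_snd
    have e1 : ∀ᶠ p : Euc n × ℝ in 𝓝 (y, s), p.1 ∈ O :=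
      (continuousAt_fst (p := ((y, s) : Euc n × ℝ))).eventually (hO.mem_nhds hy)
    filter_upwards [e1, c1.eventually_lt c2 hs] with p hp1 hp2 using ⟨hp1, hp2⟩
  obtain ⟨L, hL⟩ := geometric_hahn_banach_open_point hh.convex_strict_epigraph hopen
    (x := (x0, h x0)) (by simp)
  set s := L (0, 1) with hs
  have hsplit : ∀ (y : Euc n) (r : ℝ), L (y, r) = L (y, 0) + r * s := by
    intro y r
    have : ((y, r) : Euc n × ℝ) = (y, 0) + r • (0, 1) := by simp
    rw [this, map_add, map_smul, smul_eq_mul]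
  have hs0 : s < 0 := by
    have := hL (x0, h x0 + 1) ⟨hx0, by simp⟩
    rw [hsplit, hsplit x0 (h x0)] at this
    linarith
  have hle : ∀ y ∈ O, L (y, 0) + h y * s ≤ L (x0, 0) + h x0 * s := by
    intro y hy
    refine le_of_forall_pos_lt_add fun ε hε => ?_
    have := hL (y, h y + ε / (-s)) ⟨hy, by
      have : 0 < ε / (-s) := div_pos hε (by linarith)
      simpa using this⟩
    rw [hsplit, hsplit x0 (h x0), add_mul] at this
    have e : ε / (-s) * s = -ε := by
      have := hs0.ne
      rw [div_neg, neg_mul, div_mul_cancel₀ _ this]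
    linarith
  refine ⟨(-s⁻¹) • L.comp (ContinuousLinearMap.inl ℝ (Euc n) ℝ), h x0 + s⁻¹ * L (x0, 0), ?_, ?_⟩
  · intro y hy
    have := hle y hy
    have h3 := mul_le_mul_of_nonneg_left this (neg_nonneg.2 (inv_lt_zero.2 hs0).le)
    have e1 : s⁻¹ * s = 1 := inv_mul_cancel₀ hs0.ne
    simp only [smul_apply, ContinuousLinearMap.comp_apply,
      ContinuousLinearMap.inl_apply, smul_eq_mul]
    have e2 : -s⁻¹ * (L (y, 0) + h y * s) = -s⁻¹ * L (y, 0) - h y := by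
      linear_combination (-h y) * e1
    have e3 : -s⁻¹ * (L (x0, 0) + h x0 * s) = -s⁻¹ * L (x0, 0) - h x0 := by
      linear_combination (-h x0) * e1
    rw [e2, e3] at h3
    linarith
  · simp

lemma envelope {n : ℕ} {O : Set (Euc n)} (hO : IsOpen O) (hc : Convex ℝ O) (hne : O.Nonempty)
    {g : Euc n → ℝ≥0∞} (hg : LogConvexOn O g) (hf : ∀ x ∈ O, g x ≠ ⊤) (hp : ∀ x ∈ O, g x ≠ 0) :
    ∃ w : Euc n → ℝ≥0∞, LowerSemicontinuous w ∧ (∀ x, 0 < w x) ∧ LogConvexOn Set.univ w ∧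
      Set.EqOn w g O := by
  have hpos : ∀ x ∈ O, 0 < (g x).toReal := fun x hx => ENNReal.toReal_pos (hp x hx) (hf x hx)
  have hh : ConvexOn ℝ O (fun x => Real.log (g x).toReal) := by
    refine ⟨hc, fun x hx y hy a b ha hb hab => ?_⟩
    have hb1 : b ≤ 1 := by linarith
    have ea : a = 1 - b := by linarith
    have hm : a • x + b • y ∈ O := hc hx hy ha hb hab
    have h := hg hx hy hb hb1
    rw [← ea] at h
    have h' := ENNReal.toReal_mono (ENNReal.mul_ne_top
      (ENNReal.rpow_ne_top_of_nonneg ha (hf x hx)) (ENNReal.rpow_ne_top_of_nonneg hb (hf y hy))) h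
    rw [ENNReal.toReal_mul, ← ENNReal.toReal_rpow, ← ENNReal.toReal_rpow] at h'
    have h2 := Real.log_le_log (hpos _ hm) h'
    have p1 := hpos x hx
    have p2 := hpos y hy
    rw [Real.log_mul (by positivity) (by positivity), Real.log_rpow p1, Real.log_rpow p2] at h2
    simpa using h2
  let A := {a : (Euc n →L[ℝ] ℝ) × ℝ // ∀ y ∈ O, ENNReal.ofReal (Real.exp (a.1 y + a.2)) ≤ g y}
  have hsupp : ∀ x ∈ O, ∃ a : A, ENNReal.ofReal (Real.exp (a.1.1 x + a.1.2)) = g x := by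
    intro x hx
    obtain ⟨f, c, h1, h2⟩ := supporting hO hh hx
    refine ⟨⟨(f, c), fun y hy => ?_⟩, ?_⟩
    · refine ENNReal.ofReal_le_of_le_toReal ?_
      rw [← Real.le_log_iff_exp_le (hpos y hy)]
      exact h1 y hy
    · simp only [h2]
      rw [Real.exp_log (hpos x hx), ENNReal.ofReal_toReal (hf x hx)]
  refine ⟨fun x => ⨆ a : A, ENNReal.ofReal (Real.exp (a.1.1 x + a.1.2)), ?_, ?_, ?_, ?_⟩
  · refine lowerSemicontinuous_iSup fun a => Continuous.lowerSemicontinuous ?_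
    exact ENNReal.continuous_ofReal.comp (Real.continuous_exp.comp (a.1.1.continuous.add continuous_const))
  · intro x
    obtain ⟨y, hy⟩ := hne
    obtain ⟨a, -⟩ := hsupp y hy
    refine lt_of_lt_of_le ?_ (le_iSup _ a)
    simpa using Real.exp_pos _
  · intro x _ y _ t h0 h1
    refine iSup_le fun a => ?_
    have e : ENNReal.ofReal (Real.exp (a.1.1 ((1 - t) • x + t • y) + a.1.2)) =
        ENNReal.ofReal (Real.exp (a.1.1 x + a.1.2)) ^ (1 - t) *
        ENNReal.ofReal (Real.exp (a.1.1 y + a.1.2)) ^ t := by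
      rw [ENNReal.ofReal_rpow_of_pos (Real.exp_pos _), ENNReal.ofReal_rpow_of_pos (Real.exp_pos _),
        ← ENNReal.ofReal_mul (by positivity), ← Real.exp_mul, ← Real.exp_mul, ← Real.exp_add]
      congr 2
      rw [map_add, map_smul, map_smul, smul_eq_mul, smul_eq_mul]; ring
    rw [e]
    exact mul_le_mul' (ENNReal.rpow_le_rpow (le_iSup (fun a : A => ENNReal.ofReal (Real.exp (a.1.1 x + a.1.2))) a) (by linarith))
      (ENNReal.rpow_le_rpow (le_iSup (fun a : A => ENNReal.ofReal (Real.exp (a.1.1 y + a.1.2))) a) h0)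
  · intro x hx
    refine le_antisymm (iSup_le fun a => a.2 x hx) ?_
    obtain ⟨a, ha⟩ := hsupp x hx
    rw [← ha]
    exact le_iSup (fun a : A => ENNReal.ofReal (Real.exp (a.1.1 x + a.1.2))) a

lemma fatou_q {α : Type*} [MeasurableSpace α] {ν : Measure α}
    {v : ℕ → α → ℝ≥0∞} (hm : ∀ k, AEMeasurable (v k) ν) {w : α → ℝ≥0∞}
    (hlim : ∀ᵐ x ∂ν, Tendsto (fun k => v k x) atTop (𝓝 (w x))) {q : ℝ}
    {C : ℝ≥0∞} (hb : ∀ k, ∫⁻ x, v k x ^ q ∂ν ≤ C) : ∫⁻ x, w x ^ q ∂ν ≤ C := by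
  calc ∫⁻ x, w x ^ q ∂ν = ∫⁻ x, liminf (fun k => v k x ^ q) atTop ∂ν := by
        refine lintegral_congr_ae ?_
        filter_upwards [hlim] with x hx
        exact (((ENNReal.continuous_rpow_const (y := q)).tendsto _).comp hx).liminf_eq.symm
    _ ≤ liminf (fun k => ∫⁻ x, v k x ^ q ∂ν) atTop :=
        lintegral_liminf_le' fun k => (hm k).pow_const _
    _ ≤ liminf (fun _ => C) atTop := liminf_le_liminf (Eventually.of_forall hb)
    _ = C := liminf_const _

lemma Lp_conv0 {α : Type*} [MeasurableSpace α] {ν : Measure α} [IsFiniteMeasure ν]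
    {v : ℕ → α → ℝ≥0∞} (hm : ∀ k, AEMeasurable (v k) ν) {w : α → ℝ≥0∞} (hw : AEMeasurable w ν)
    (hlim : ∀ᵐ x ∂ν, Tendsto (fun k => v k x) atTop (𝓝 (w x))) (hfin : ∀ᵐ x ∂ν, w x ≠ ⊤)
    {p q : ℝ} (hp : 0 < p) (hpq : p < q) (hq : 1 ≤ q)
    {C : ℝ≥0∞} (hC : C ≠ ⊤) (hb : ∀ k, ∫⁻ x, v k x ^ q ∂ν ≤ C) :
    Tendsto (fun k => ∫⁻ x, ((v k x - w x) + (w x - v k x)) ^ p ∂ν) atTop (𝓝 0) := by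
  have hwC : ∫⁻ x, w x ^ q ∂ν ≤ C := fatou_q hm hlim hb
  refine power_trunc (C := (2:ℝ≥0∞) ^ (q - 1) * (C + C)) (q := q)
    (h := fun k x => (v k x - w x) + (w x - v k x))
    (fun k => ((hm k).sub hw).add (hw.sub (hm k))) ?_ hp hpq ?_ ?_
  · filter_upwards [hlim, hfin] with x hx hx2
    have h1 : Tendsto (fun k => v k x - w x) atTop (𝓝 (w x - w x)) :=
      ENNReal.Tendsto.sub hx tendsto_const_nhds (Or.inl hx2)
    have h2 : Tendsto (fun k => w x - v k x) atTop (𝓝 (w x - w x)) :=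
      ENNReal.Tendsto.sub tendsto_const_nhds hx (Or.inl hx2)
    simpa using h1.add h2
  · exact ENNReal.mul_ne_top (ENNReal.rpow_ne_top_of_nonneg (by linarith) (by simp))
      (ENNReal.add_ne_top.2 ⟨hC, hC⟩)
  · intro k
    calc ∫⁻ x, ((v k x - w x) + (w x - v k x)) ^ q ∂ν
        ≤ ∫⁻ x, (2:ℝ≥0∞) ^ (q - 1) * (v k x ^ q + w x ^ q) ∂ν := by
          refine lintegral_mono fun x => ?_
          refine le_trans (ENNReal.rpow_le_rpow (add_le_add tsub_le_self tsub_le_self)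
            (by linarith)) ?_
          exact ENNReal.rpow_add_le_mul_rpow_add_rpow _ _ hq
      _ = (2:ℝ≥0∞) ^ (q - 1) * ∫⁻ x, (v k x ^ q + w x ^ q) ∂ν :=
          lintegral_const_mul'' _ (((hm k).pow_const _).add (hw.pow_const _))
      _ = (2:ℝ≥0∞) ^ (q - 1) * (∫⁻ x, v k x ^ q ∂ν + ∫⁻ x, w x ^ q ∂ν) := by
          rw [lintegral_add_left' ((hm k).pow_const _)]
      _ ≤ _ := by gcongr; exact hb k

lemma exists_q (n : ℕ) : ∃ q : ℝ, 1 < q ∧ (q - 1) * ((n:ℝ) - 1) < 1 := by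
  have : (0:ℝ) ≤ n := by positivity
  refine ⟨1 + 1 / (n + 1), by simp; positivity, ?_⟩
  rw [add_sub_cancel_left, div_mul_eq_mul_div, one_mul, div_lt_one (by positivity)]
  linarith

lemma bdry_le {n : ℕ} {S : NSystem n} {v : ℕ → Euc n → ℝ≥0∞} (hv : ∀ k, v k ∈ MExp S 1)
    {w : Euc n → ℝ≥0∞} (hw : LowerSemicontinuous w)
    (hlim : ∀ x ∈ interior S.P, Tendsto (fun k => v k x) atTop (𝓝 (w x))) {x : Euc n}
    (hx : x ∈ S.P) : w x ≤ liminf (fun k => v k x) atTop := by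
  obtain ⟨z, hz⟩ := S.simple.1.2.1
  obtain ⟨r, hr, hball⟩ := Metric.isOpen_iff.1 isOpen_interior z hz
  have hballP : Metric.ball z r ⊆ S.P := hball.trans interior_subset
  set B := volume S.P / volume (Metric.ball z r) with hB
  have hBt : B ≠ ⊤ := ENNReal.div_ne_top S.volP_lt.ne (Metric.measure_ball_pos _ _ hr).ne'
  set L := liminf (fun k => v k x) atTop with hL
  have h1 : ∀ τ : ℝ, 0 < τ → τ ≤ 1 → w ((1 - τ) • x + τ • z) ≤ L + ENNReal.ofReal τ * B := by
    intro τ h0 h1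
    have hm : (1 - τ) • x + τ • z ∈ interior S.P :=
      interior_maximal (ball_combo S.convex hx hballP h0 h1) Metric.isOpen_ball
        (Metric.mem_ball_self (by positivity))
    have hbt : ENNReal.ofReal τ * B ≠ ⊤ := ENNReal.mul_ne_top (by simp) hBt
    rw [← tsub_le_iff_right]
    have ht : Tendsto (fun k => v k ((1 - τ) • x + τ • z) - ENNReal.ofReal τ * B) atTop
        (𝓝 (w ((1 - τ) • x + τ • z) - ENNReal.ofReal τ * B)) :=
      ENNReal.Tendsto.sub (hlim _ hm) tendsto_const_nhds (Or.inr hbt)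
    rw [← ht.liminf_eq]
    refine liminf_le_liminf (Eventually.of_forall fun k => ?_)
    rw [tsub_le_iff_right]
    refine ((hv k).2.2.1.convexFn hx (interior_subset hz) h0.le h1).trans ?_
    refine add_le_add ?_ ?_
    · exact mul_le_of_le_one_left' (ENNReal.ofReal_le_one.2 (by linarith))
    · gcongr
      exact MExp.int_bound (hv k) hr hballP
  by_contra hcon
  push Not at hcon
  obtain ⟨m, hm1, hm2⟩ := exists_between hcon
  have hc : Tendsto (fun τ : ℝ => (1 - τ) • x + τ • z) (𝓝[>] 0) (𝓝 x) := by
    have : Continuous (fun τ : ℝ => (1 - τ) • x + τ • z) := by fun_prop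
    have h2 := this.tendsto 0
    simp only [sub_zero, one_smul, zero_smul, add_zero] at h2
    exact h2.mono_left nhdsWithin_le_nhds
  have e1 : ∀ᶠ τ in 𝓝[>] (0:ℝ), m < w ((1 - τ) • x + τ • z) := hc.eventually (hw x m hm2)
  have e2 : Tendsto (fun τ : ℝ => L + ENNReal.ofReal τ * B) (𝓝[>] 0) (𝓝 (L + ENNReal.ofReal 0 * B)) := by
    refine Tendsto.mono_left ?_ nhdsWithin_le_nhds
    refine tendsto_const_nhds.add (ENNReal.Tendsto.mul_const ?_ (Or.inr hBt))
    exact ENNReal.continuous_ofReal.tendsto 0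
  rw [ENNReal.ofReal_zero, zero_mul, add_zero] at e2
  refine absurd (ge_of_tendsto e2 ?_) (not_le.2 hm1)
  have e3 : ∀ᶠ τ in 𝓝[>] (0:ℝ), τ ≤ 1 :=
    mem_of_superset (Ioc_mem_nhdsGT (zero_lt_one' ℝ)) fun t ht => ht.2
  filter_upwards [e1, e3, self_mem_nhdsWithin] with τ h2 h3 h4
  exact h2.le.trans (h1 τ h4 h3)

lemma compactness {n : ℕ} {S : NSystem n} {u : ℕ → Euc n → ℝ≥0∞} (hu : ∀ k, u k ∈ MExp S 1)
    {C0 : ℝ≥0∞} (hC0 : C0 ≠ ⊤) (hU : ∀ k, Upf S (u k) ≤ C0) :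
    ∃ φ : ℕ → ℕ, StrictMono φ ∧ ∃ w ∈ MExp S 1,
      (∀ x ∈ interior S.P, Tendsto (fun k => u (φ k) x) atTop (𝓝 (w x))) ∧
      Upf S w ≤ liminf (fun k => Upf S (u (φ k))) atTop := by
  obtain ⟨φ, hφ, g, hg⟩ := subseq_conv hu
  refine ⟨φ, hφ, ?_⟩
  have hc : Convex ℝ (interior S.P) := S.convex.interior
  set v : ℕ → Euc n → ℝ≥0∞ := fun k => u (φ k) with hv
  have hvM : ∀ k, v k ∈ MExp S 1 := fun k => hu _
  have hfin : ∀ x ∈ interior S.P, g x ≠ ⊤ := fun x hx => lim_ne_top hvM hx (hg x hx)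
  have hlog : LogConvexOn (interior S.P) g :=
    logconv_lim hc interior_subset (fun k => (hvM k).2.2.1) hg hfin
  have hfinite : IsFiniteMeasure (volume.restrict S.P) :=
    ⟨by rw [Measure.restrict_apply_univ]; exact S.volP_lt⟩
  have hvm : ∀ k, AEMeasurable (v k) (volume.restrict S.P) := fun k =>
    lsc_aemeasurable S.closed (hvM k).1 S.closed.measurableSet subset_rfl _
  have hae : ∀ᵐ x ∂(volume.restrict S.P), Tendsto (fun k => v k x) atTop (𝓝 (g x)) := by
    filter_upwards [S.ae_interior] with x hx using hg x hx
  have haef : ∀ᵐ x ∂(volume.restrict S.P), g x ≠ ⊤ := by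
    filter_upwards [S.ae_interior] with x hx using hfin x hx
  have hgm : AEMeasurable g (volume.restrict S.P) := aemeasurable_of_tendsto_metrizable_ae _ hvm hae
  obtain ⟨q, hq1, hqn⟩ := exists_q n
  obtain ⟨C, hC, hCb⟩ := Lq_bound S hq1.le hqn hC0
  have hL1 := Lp_conv0 hvm hgm hae haef one_pos hq1 hq1.le hC (fun k => hCb _ (hvM k) (hU _))
  simp only [ENNReal.rpow_one] at hL1
  have hmass : ∫⁻ x in S.P, g x = volume S.P := by
    refine le_antisymm ?_ ?_
    · have := fatou_q (q := 1) hvm hae (C := volume S.P) (fun k => by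
        simp only [ENNReal.rpow_one]; exact (MExp.vol (hvM k)).le)
      simpa using this
    · have h2 := hL1.const_add (∫⁻ x in S.P, g x)
      rw [add_zero] at h2
      refine ge_of_tendsto' h2 fun k => ?_
      rw [← MExp.vol (hvM k), ← lintegral_add_left' hgm]
      refine lintegral_mono fun x => ?_
      refine (le_add_tsub (a := v k x) (b := g x)).trans ?_
      gcongr
      exact le_self_add
  have hpos : ∀ x ∈ interior S.P, g x ≠ 0 := by
    intro x0 hx0 h0
    have hz : ∀ x ∈ interior S.P, g x = 0 := by
      intro x hx
      have hct : Tendsto (fun ε : ℝ => x + ε • (x - x0)) (𝓝[>] 0) (𝓝 x) := by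
        have : Continuous (fun ε : ℝ => x + ε • (x - x0)) := by fun_prop
        have h2 := this.tendsto 0
        simp only [zero_smul, add_zero] at h2
        exact h2.mono_left nhdsWithin_le_nhds
      obtain ⟨ε, hε1, hε2⟩ := ((hct.eventually (isOpen_interior.mem_nhds hx)).and
        self_mem_nhdsWithin).exists
      have hε : 0 < ε := hε2
      have ht1 : (1 + ε)⁻¹ < 1 := inv_lt_one_of_one_lt₀ (by linarith)
      have h := hlog hx0 hε1 (t := (1 + ε)⁻¹) (by positivity) ht1.le
      have ex : (1 - (1 + ε)⁻¹) • x0 + (1 + ε)⁻¹ • (x + ε • (x - x0)) = x := by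
        have e1 : (1 + ε)⁻¹ * (1 + ε) = 1 := inv_mul_cancel₀ (by positivity)
        calc _ = (1 - (1 + ε)⁻¹ * (1 + ε)) • x0 + ((1 + ε)⁻¹ * (1 + ε)) • x := by module
          _ = x := by rw [e1]; simp
      rw [ex, h0, ENNReal.zero_rpow_of_pos (by linarith), zero_mul] at h
      exact nonpos_iff_eq_zero.1 h
    have : ∫⁻ x in S.P, g x = 0 := by
      rw [lintegral_eq_zero_iff' hgm]
      filter_upwards [S.ae_interior] with x hx using hz x hx
    exact S.volP_pos (hmass.symm.trans this)
  obtain ⟨w, hwl, hwp, hwc, hwe⟩ := envelope isOpen_interior hc S.simple.1.2.1 hlog hfin hpos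
  have hwlim : ∀ x ∈ interior S.P, Tendsto (fun k => v k x) atTop (𝓝 (w x)) := by
    intro x hx; rw [hwe hx]; exact hg x hx
  have hwmass : ∫⁻ x in S.P, w x ∂S.μ = S.μ S.P := by
    obtain ⟨c, h0, h1, e, h⟩ := S.mu_eq
    rw [e, h, lintegral_smul_measure, smul_eq_mul, ← hmass]
    congr 1
    refine lintegral_congr_ae ?_
    filter_upwards [S.ae_interior] with x hx using hwe hx
  refine ⟨w, ⟨hwl.lowerSemicontinuousOn _, fun x _ => hwp x, fun x _ y _ t => @hwc x trivial y trivial t,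
    hwmass, ?_⟩, hwlim, ?_⟩
  · simp only [ENNReal.rpow_one, hwmass]
    exact S.muP_ne_top.lt_top
  · have hfm : MeasurableSet (frontier S.P) := isClosed_frontier.measurableSet
    have h1 : ∫⁻ x in frontier S.P, w x ∂S.σ ≤
        liminf (fun k => ∫⁻ x in frontier S.P, v k x ∂S.σ) atTop := by
      refine le_trans (setLIntegral_mono' hfm fun x hx => bdry_le hvM hwl hwlim (S.frontier_sub hx)) ?_
      exact lintegral_liminf_le' fun k =>
        lsc_aemeasurable S.closed (hvM k).1 hfm S.frontier_sub _
    unfold Upf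
    refine (mul_le_mul_right h1 _).trans (le_of_eq ?_)
    exact (ENNReal.liminf_const_mul_of_ne_zero_of_ne_top (ENNReal.inv_ne_zero.2 S.muP_ne_top)
      (ENNReal.inv_ne_top.2 S.muP_ne_zero)).symm

/-- convergence in `L^p(μ)` -/
lemma Lp_conv {n : ℕ} {S : NSystem n} {u : ℕ → Euc n → ℝ≥0∞} (hu : ∀ k, u k ∈ MExp S 1)
    {C0 : ℝ≥0∞} (hC0 : C0 ≠ ⊤) (hU : ∀ k, Upf S (u k) ≤ C0) {w : Euc n → ℝ≥0∞}
    (hw : w ∈ MExp S 1)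
    (hlim : ∀ x ∈ interior S.P, Tendsto (fun k => u k x) atTop (𝓝 (w x))) {p q : ℝ}
    (hp : 0 < p) (hpq : p < q) (hq : 1 ≤ q) (hqn : (q - 1) * ((n:ℝ) - 1) < 1) :
    Tendsto (fun k => ∫⁻ x in S.P, ((u k x - w x) + (w x - u k x)) ^ p ∂S.μ) atTop (𝓝 0) := by
  have hfinite : IsFiniteMeasure (volume.restrict S.P) :=
    ⟨by rw [Measure.restrict_apply_univ]; exact S.volP_lt⟩
  obtain ⟨C, hC, hCb⟩ := Lq_bound S hq hqn hC0
  obtain ⟨c, h0, h1, e, h⟩ := S.mu_eq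
  simp only [e, lintegral_smul_measure, smul_eq_mul]
  have := Lp_conv0 (ν := volume.restrict S.P) (v := u) (w := w)
    (fun k => lsc_aemeasurable S.closed (hu k).1 S.closed.measurableSet subset_rfl _)
    (lsc_aemeasurable S.closed hw.1 S.closed.measurableSet subset_rfl _)
    (by filter_upwards [S.ae_interior] with x hx using hlim x hx)
    (by filter_upwards [S.ae_interior] with x hx using lim_ne_top hu hx (hlim x hx))
    hp hpq hq hC (fun k => hCb _ (hu k) (hU k))
  simpa using ENNReal.Tendsto.const_mul this (Or.inr h1)

/-- minus the entropy, as an extended nonnegative number -/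
def Npf {n : ℕ} (S : NSystem n) (u : Euc n → ℝ≥0∞) : ℝ≥0∞ :=
  (S.μ S.P)⁻¹ * ∫⁻ x in S.P, ENNReal.ofReal (InformationTheory.klFun (u x).toReal) ∂S.μ

lemma NSystem.ae_int_mu {n : ℕ} (S : NSystem n) : ∀ᵐ x ∂(S.μ.restrict S.P), x ∈ interior S.P := by
  obtain ⟨c, h0, h1, e, h⟩ := S.mu_eq
  rw [e]
  exact Measure.ae_smul_measure S.ae_interior c

lemma MExp.fin_int {n : ℕ} {S : NSystem n} {p : ℝ} {u : Euc n → ℝ≥0∞} (hu : u ∈ MExp S p)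
    {x : Euc n} (hx : x ∈ interior S.P) : u x ≠ ⊤ := by
  obtain ⟨r, hr, hball⟩ := Metric.isOpen_iff.1 isOpen_interior x hx
  exact ne_top_of_le_ne_top (ENNReal.div_ne_top S.volP_lt.ne
    (Metric.measure_ball_pos volume x hr).ne') (MExp.int_bound hu hr (hball.trans interior_subset))

lemma MExp.aem {n : ℕ} {S : NSystem n} {p : ℝ} {u : Euc n → ℝ≥0∞} (hu : u ∈ MExp S p) :
    AEMeasurable u (S.μ.restrict S.P) :=
  lsc_aemeasurable S.closed hu.1 S.closed.measurableSet subset_rfl _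

lemma MExp.kl_aem {n : ℕ} {S : NSystem n} {p : ℝ} {u : Euc n → ℝ≥0∞} (hu : u ∈ MExp S p) :
    AEMeasurable (fun x => ENNReal.ofReal (InformationTheory.klFun (u x).toReal))
      (S.μ.restrict S.P) :=
  (InformationTheory.measurable_klFun.comp_aemeasurable (MExp.aem hu).ennreal_toReal).ennreal_ofReal

lemma kl_point {y : ℝ≥0∞} (hy : y ≠ ⊤) : ENNReal.ofReal (InformationTheory.klFun y.toReal) +
    ENNReal.ofReal (-(xlogx y)) + y = ENNReal.ofReal (xlogx y) + 1 := by
  obtain ⟨a, ha, rfl⟩ : ∃ a : ℝ, 0 ≤ a ∧ y = ENNReal.ofReal a :=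
    ⟨y.toReal, ENNReal.toReal_nonneg, (ENNReal.ofReal_toReal hy).symm⟩
  have hk := InformationTheory.klFun_nonneg ha
  simp only [xlogx, ENNReal.toReal_ofReal ha]
  rw [← ENNReal.ofReal_one]
  rcases le_total 0 (a * Real.log a) with h | h
  · rw [ENNReal.ofReal_of_nonpos (by linarith : -(a * Real.log a) ≤ 0), add_zero,
      ← ENNReal.ofReal_add hk ha, ← ENNReal.ofReal_add h zero_le_one]
    congr 1
    rw [InformationTheory.klFun_apply]; ring
  · rw [ENNReal.ofReal_of_nonpos h, zero_add, ← ENNReal.ofReal_add hk (by linarith),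
      ← ENNReal.ofReal_add (by linarith) ha]
    congr 1
    rw [InformationTheory.klFun_apply]; ring

lemma ereal_aux {B K : ℝ≥0∞} (hBt : B ≠ ⊤) :
    (B : EReal) - ((K + B : ℝ≥0∞) : EReal) = -(K : EReal) := by
  rcases eq_or_ne K ⊤ with h | h
  · rw [h, top_add]
    lift B to ℝ≥0 using hBt
    have e : ∀ y : ℝ≥0, (((y : ℝ≥0∞)) : EReal) = ((y : ℝ) : EReal) := fun y => rfl
    rw [e, EReal.coe_ennreal_top]
    simp
  · lift B to ℝ≥0 using hBt
    lift K to ℝ≥0 using h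
    rw [EReal.coe_ennreal_add]
    have e : ∀ y : ℝ≥0, (((y : ℝ≥0∞)) : EReal) = ((y : ℝ) : EReal) := fun y => rfl
    rw [e, e, ← EReal.coe_add, ← EReal.coe_sub, ← EReal.coe_neg]
    congr 1
    ring

lemma Spf_eq {n : ℕ} {S : NSystem n} {u : Euc n → ℝ≥0∞} (hu : u ∈ MExp S 1) :
    Spf S u = -((Npf S u : ℝ≥0∞) : EReal) := by
  set A := ∫⁻ x in S.P, ENNReal.ofReal (xlogx (u x)) ∂S.μ with hA
  set B := ∫⁻ x in S.P, ENNReal.ofReal (-(xlogx (u x))) ∂S.μ with hB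
  set K := ∫⁻ x in S.P, ENNReal.ofReal (InformationTheory.klFun (u x).toReal) ∂S.μ with hK
  have hm := S.muP_ne_top
  have hum := MExp.aem hu
  have hxm : AEMeasurable (fun x => xlogx (u x)) (S.μ.restrict S.P) := by
    unfold xlogx
    exact hum.ennreal_toReal.mul (Real.measurable_log.comp_aemeasurable hum.ennreal_toReal)
  have hBt : B ≠ ⊤ := by
    refine ne_top_of_le_ne_top (b := 1 * S.μ S.P) (by simpa using hm) ?_
    rw [← setLIntegral_const, hB]
    refine lintegral_mono fun x => ?_
    rw [ENNReal.ofReal_le_one]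
    have h1 := InformationTheory.klFun_nonneg (x := (u x).toReal) ENNReal.toReal_nonneg
    by_cases hx : (u x).toReal ≤ 1
    · rcases (ENNReal.toReal_nonneg : 0 ≤ (u x).toReal).eq_or_lt with h0 | h0
      · simp [xlogx, ← h0]
      · have h2 := Real.one_sub_inv_le_log_of_pos h0
        have h3 := mul_le_mul_of_nonneg_left h2 h0.le
        rw [mul_sub, mul_inv_cancel₀ h0.ne'] at h3
        unfold xlogx; linarith
    · have : 0 ≤ xlogx (u x) := mul_nonneg ENNReal.toReal_nonneg (Real.log_nonneg (by linarith))
      linarith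
  have key : K + B + S.μ S.P = A + S.μ S.P := by
    have h1 : ∫⁻ x in S.P, (ENNReal.ofReal (InformationTheory.klFun (u x).toReal) +
        ENNReal.ofReal (-(xlogx (u x))) + u x) ∂S.μ =
        ∫⁻ x in S.P, (ENNReal.ofReal (xlogx (u x)) + 1) ∂S.μ := by
      refine lintegral_congr_ae ?_
      filter_upwards [S.ae_int_mu] with x hx using kl_point (MExp.fin_int hu hx)
    have hneg : AEMeasurable (fun x => ENNReal.ofReal (-(xlogx (u x)))) (S.μ.restrict S.P) :=
      hxm.neg.ennreal_ofReal
    rw [lintegral_add_right' _ hum, lintegral_add_right' _ hneg,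
      lintegral_add_right' _ aemeasurable_const, hu.2.2.2.1, setLIntegral_const, one_mul] at h1
    exact h1
  have key2 : K + B = A := (ENNReal.add_left_inj hm).1 key
  have key3 : (B : EReal) - (A : EReal) = -(K : EReal) := by
    rw [← key2]
    exact ereal_aux hBt
  rw [Spf, key3, Npf, EReal.coe_ennreal_mul, mul_neg]
  congr 2
  rw [← ENNReal.toReal_inv]
  exact EReal.coe_ennreal_toReal (ENNReal.inv_ne_top.2 S.muP_ne_zero)

lemma Fpf_eq {n : ℕ} {S : NSystem n} {u : Euc n → ℝ≥0∞} (hu : u ∈ MExp S 1) (hN : Npf S u ≠ ⊤)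
    {T : ℝ} (hT : 0 ≤ T) :
    Fpf S T u = ((Upf S u + ENNReal.ofReal T * Npf S u : ℝ≥0∞) : EReal) := by
  have h : Spf S u ≠ ⊥ := by
    rw [Spf_eq hu]
    simpa using hN
  rw [Fpf, if_neg h, Spf_eq hu, EReal.coe_ennreal_add, EReal.coe_ennreal_mul, mul_neg, sub_eq_add_neg, neg_neg,
    EReal.coe_ennreal_ofReal, max_eq_left hT]

lemma Fpf_top {n : ℕ} {S : NSystem n} {u : Euc n → ℝ≥0∞} (hu : u ∈ MExp S 1) (hN : Npf S u = ⊤)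
    {T : ℝ} : Fpf S T u = ⊤ := by
  rw [Fpf, if_pos]
  rw [Spf_eq hu, hN]; simp

lemma Npf_ne_top {n : ℕ} {S : NSystem n} {u : Euc n → ℝ≥0∞} (hu : u ∈ MExp S 1)
    (hU : Upf S u ≠ ⊤) : Npf S u ≠ ⊤ := by
  obtain ⟨q, hq1, hqn⟩ := exists_q n
  obtain ⟨C, hC, hCb⟩ := Lq_bound S hq1.le hqn hU
  have hb := hCb u hu le_rfl
  obtain ⟨c, h0, h1, e, h⟩ := S.mu_eq
  refine ENNReal.mul_ne_top (ENNReal.inv_ne_top.2 S.muP_ne_zero) ?_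
  rw [e, lintegral_smul_measure, smul_eq_mul]
  refine ENNReal.mul_ne_top h1 ?_
  have hum : AEMeasurable u (volume.restrict S.P) :=
    lsc_aemeasurable S.closed hu.1 S.closed.measurableSet subset_rfl _
  have hle : ∫⁻ x in S.P, ENNReal.ofReal (InformationTheory.klFun (u x).toReal) ≤
      ∫⁻ x in S.P, (ENNReal.ofReal (1 / (q - 1)) * u x ^ q + 1) := by
    refine lintegral_mono_ae ?_
    filter_upwards [S.ae_interior] with x hx
    have hxt := MExp.fin_int hu hx
    obtain ⟨a, ha, hax⟩ : ∃ a : ℝ, 0 ≤ a ∧ u x = ENNReal.ofReal a :=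
      ⟨(u x).toReal, ENNReal.toReal_nonneg, (ENNReal.ofReal_toReal hxt).symm⟩
    have hq0 : 0 < q - 1 := by linarith
    rw [hax, ENNReal.toReal_ofReal ha, ENNReal.ofReal_rpow_of_nonneg ha (by linarith),
      ← ENNReal.ofReal_mul (by positivity), ← ENNReal.ofReal_one,
      ← ENNReal.ofReal_add (by positivity) zero_le_one]
    refine ENNReal.ofReal_le_ofReal ?_
    rw [InformationTheory.klFun_apply]
    have h2 := mul_le_mul_of_nonneg_left (Real.log_le_rpow_div ha hq0) ha
    have h3 : a * (a ^ (q - 1) / (q - 1)) = 1 / (q - 1) * a ^ q := by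
      have : a ^ q = a * a ^ (q - 1) := by
        rcases ha.eq_or_lt with h | h
        · rw [← h, Real.zero_rpow (by linarith), zero_mul]
        · rw [← Real.rpow_one_add' ha (by linarith)]; congr 1; ring
      rw [this]; ring
    linarith
  refine ne_top_of_le_ne_top ?_ hle
  rw [lintegral_add_right' _ aemeasurable_const, lintegral_const_mul'' _ (hum.pow_const _),
    setLIntegral_const, one_mul]
  exact ENNReal.add_ne_top.2 ⟨ENNReal.mul_ne_top (by simp) (ne_top_of_le_ne_top hC hb), S.volP_lt.ne⟩

lemma Npf_lsc {n : ℕ} {S : NSystem n} {v : ℕ → Euc n → ℝ≥0∞} (hv : ∀ k, v k ∈ MExp S 1)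
    {w : Euc n → ℝ≥0∞} (hw : w ∈ MExp S 1)
    (hlim : ∀ x ∈ interior S.P, Tendsto (fun k => v k x) atTop (𝓝 (w x))) :
    Npf S w ≤ liminf (fun k => Npf S (v k)) atTop := by
  unfold Npf
  refine le_trans ?_ (ENNReal.liminf_const_mul_of_ne_zero_of_ne_top
    (ENNReal.inv_ne_zero.2 S.muP_ne_top) (ENNReal.inv_ne_top.2 S.muP_ne_zero)).symm.le
  gcongr
  refine le_trans (le_of_eq ?_) (lintegral_liminf_le' fun k => MExp.kl_aem (hv k))
  refine lintegral_congr_ae ?_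
  filter_upwards [S.ae_int_mu] with x hx
  have h1 := (ENNReal.tendsto_toReal (MExp.fin_int hw hx)).comp (hlim x hx)
  have h2 := (InformationTheory.continuous_klFun.tendsto _).comp h1
  exact ((ENNReal.continuous_ofReal.tendsto _).comp h2).liminf_eq.symm

lemma one_mem {n : ℕ} (S : NSystem n) : (fun _ => 1 : Euc n → ℝ≥0∞) ∈ MExp S 1 := by
  refine ⟨continuousOn_const.lowerSemicontinuousOn, fun _ _ => one_pos, ?_, ?_, ?_⟩
  · intro x _ y _ t _ _
    simp
  · simp
  · simpa using S.muP_ne_top.lt_top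

lemma Npf_one {n : ℕ} (S : NSystem n) : Npf S (fun _ => 1) = 0 := by
  simp [Npf, InformationTheory.klFun_one]

lemma Upf_one_ne_top {n : ℕ} (S : NSystem n) : Upf S (fun _ => 1) ≠ ⊤ := by
  refine ENNReal.mul_ne_top (ENNReal.inv_ne_top.2 S.muP_ne_zero) ?_
  simpa using (sigma_lt_top S).ne

def midf {n : ℕ} (u w : Euc n → ℝ≥0∞) : Euc n → ℝ≥0∞ := fun x => 2⁻¹ * (u x + w x)

lemma two_inv_split {t : ℝ} : (2⁻¹ : ℝ≥0∞) ^ (1 - t) * (2⁻¹ : ℝ≥0∞) ^ t = 2⁻¹ := by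
  rw [← ENNReal.rpow_add _ _ (by simp) (by simp)]
  simp

lemma mid_mem {n : ℕ} {S : NSystem n} {u w : Euc n → ℝ≥0∞} (hu : u ∈ MExp S 1)
    (hw : w ∈ MExp S 1) : midf u w ∈ MExp S 1 := by
  have hi : ∫⁻ x in S.P, midf u w x ∂S.μ = S.μ S.P := by
    unfold midf
    rw [lintegral_const_mul' _ _ (by simp), lintegral_add_right' _ (MExp.aem hw), hu.2.2.2.1,
      hw.2.2.2.1, ← two_mul, ← mul_assoc, ENNReal.inv_mul_cancel (by simp) (by simp), one_mul]
  refine ⟨?_, ?_, ?_, hi, ?_⟩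
  · have h := LowerSemicontinuousOn.add hu.1 hw.1
    exact Continuous.comp_lowerSemicontinuousOn (g := fun y : ℝ≥0∞ => 2⁻¹ * y)
      (ENNReal.continuous_const_mul (by simp)) h (fun a b hab => by dsimp; gcongr)
  · intro x hx
    unfold midf
    have := hu.2.1 x hx
    refine ENNReal.mul_pos (by simp) ?_
    exact (this.trans_le le_self_add).ne'
  · intro x hx y hy t h0 h1
    unfold midf
    calc 2⁻¹ * (u ((1 - t) • x + t • y) + w ((1 - t) • x + t • y))
        ≤ 2⁻¹ * (u x ^ (1 - t) * u y ^ t + w x ^ (1 - t) * w y ^ t) := by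
          gcongr
          · exact hu.2.2.1 hx hy h0 h1
          · exact hw.2.2.1 hx hy h0 h1
      _ ≤ 2⁻¹ * ((u x + w x) ^ (1 - t) * (u y + w y) ^ t) := by
          gcongr
          exact holder2 h0 h1
      _ = (2⁻¹ * (u x + w x)) ^ (1 - t) * (2⁻¹ * (u y + w y)) ^ t := by
          rw [ENNReal.mul_rpow_of_nonneg _ _ (by linarith), ENNReal.mul_rpow_of_nonneg _ _ h0]
          nth_rw 1 [← two_inv_split (t := t)]
          ring
  · simp only [ENNReal.rpow_one]
    rw [hi]
    exact S.muP_ne_top.lt_top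

lemma Upf_mid {n : ℕ} {S : NSystem n} {u w : Euc n → ℝ≥0∞} 
    (hw : w ∈ MExp S 1) : Upf S (midf u w) = 2⁻¹ * (Upf S u + Upf S w) := by
  have hwm : AEMeasurable w (S.σ.restrict (frontier S.P)) :=
    lsc_aemeasurable S.closed hw.1 isClosed_frontier.measurableSet S.frontier_sub _
  unfold Upf midf
  rw [lintegral_const_mul' _ _ (by simp), lintegral_add_right' _ hwm]
  ring

lemma kl_mid {a b : ℝ≥0∞} (ha : a ≠ ⊤) (hb : b ≠ ⊤) :
    ENNReal.ofReal (InformationTheory.klFun (2⁻¹ * (a + b)).toReal) ≤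
      2⁻¹ * (ENNReal.ofReal (InformationTheory.klFun a.toReal) +
        ENNReal.ofReal (InformationTheory.klFun b.toReal)) ∧
    (ENNReal.ofReal (InformationTheory.klFun (2⁻¹ * (a + b)).toReal) =
      2⁻¹ * (ENNReal.ofReal (InformationTheory.klFun a.toReal) +
        ENNReal.ofReal (InformationTheory.klFun b.toReal)) → a = b) := by
  lift a to ℝ≥0 using ha
  lift b to ℝ≥0 using hb
  have e : (2⁻¹ * ((a : ℝ≥0∞) + b)).toReal = (1 / 2 : ℝ) * a + (1 / 2 : ℝ) * b := by
    simp [ENNReal.toReal_mul, ENNReal.toReal_add]; ring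
  have e2 : (2⁻¹ : ℝ≥0∞) = ENNReal.ofReal (1 / 2) := by
    rw [one_div, ENNReal.ofReal_inv_of_pos (by norm_num)]; simp
  have ka := InformationTheory.klFun_nonneg a.coe_nonneg
  have kb := InformationTheory.klFun_nonneg b.coe_nonneg
  rw [e, e2, ENNReal.coe_toReal, ENNReal.coe_toReal, ← ENNReal.ofReal_add ka kb,
    ← ENNReal.ofReal_mul (by norm_num)]
  constructor
  · refine ENNReal.ofReal_le_ofReal ?_
    have := InformationTheory.convexOn_klFun.2 (Set.mem_Ici.2 a.coe_nonneg)
      (Set.mem_Ici.2 b.coe_nonneg) (by norm_num : (0:ℝ) ≤ 1 / 2) (by norm_num : (0:ℝ) ≤ 1 / 2)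
      (by norm_num)
    simp only [smul_eq_mul] at this
    linarith
  · intro h
    by_contra hne
    have hne2 : (a : ℝ) ≠ b := fun h => hne (by exact_mod_cast h)
    have := InformationTheory.strictConvexOn_klFun.2 (Set.mem_Ici.2 a.coe_nonneg)
      (Set.mem_Ici.2 b.coe_nonneg) hne2 (by norm_num : (0:ℝ) < 1 / 2)
      (by norm_num : (0:ℝ) < 1 / 2) (by norm_num)
    simp only [smul_eq_mul] at this
    rw [ENNReal.ofReal_eq_ofReal_iff (InformationTheory.klFun_nonneg (by positivity))
      (by positivity)] at h
    linarith

lemma int_eq {n : ℕ} {S : NSystem n} {u w : Euc n → ℝ≥0∞} (hu : u ∈ MExp S 1)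
    (hw : w ∈ MExp S 1) (h : u =ᵐ[S.μ.restrict S.P] w) : ∀ x ∈ interior S.P, u x = w x := by
  have cont : ∀ v ∈ MExp S 1, ContinuousOn v (interior S.P) := by
    intro v hv
    refine conv_cont isOpen_interior S.convex.interior ?_ (fun x hx => MExp.fin_int hv hx)
    intro x hx y hy t h0 h1
    exact hv.2.2.1.convexFn (interior_subset hx) (interior_subset hy) h0 h1
  obtain ⟨c, h0, h1, e, -⟩ := S.mu_eq
  have h2 : u =ᵐ[volume.restrict S.P] w := by
    have h3 : ∀ᵐ x ∂(c • volume.restrict S.P), u x = w x := by rw [← e]; exact h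
    exact (Measure.ae_ennreal_smul_measure_iff h0).1 h3
  have h4 : u =ᵐ[volume.restrict (interior S.P)] w :=
    ae_restrict_of_ae_restrict_of_subset interior_subset h2
  exact Measure.eqOn_open_of_ae_eq h4 isOpen_interior (cont u hu) (cont w hw)

lemma Npf_mid {n : ℕ} {S : NSystem n} {u w : Euc n → ℝ≥0∞} (hu : u ∈ MExp S 1)
    (hw : w ∈ MExp S 1) (hNu : Npf S u ≠ ⊤) (hNw : Npf S w ≠ ⊤)
    (h : 2⁻¹ * (Npf S u + Npf S w) ≤ Npf S (midf u w)) : ∀ x ∈ interior S.P, u x = w x := by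
  set f := fun x => ENNReal.ofReal (InformationTheory.klFun (midf u w x).toReal) with hf
  set g := fun x => 2⁻¹ * (ENNReal.ofReal (InformationTheory.klFun (u x).toReal) +
        ENNReal.ofReal (InformationTheory.klFun (w x).toReal)) with hg
  have hgm : AEMeasurable g (S.μ.restrict S.P) :=
    ((MExp.kl_aem hu).add (MExp.kl_aem hw)).const_mul _
  have hle : f ≤ᵐ[S.μ.restrict S.P] g := by
    filter_upwards [S.ae_int_mu] with x hx
    exact (kl_mid (MExp.fin_int hu hx) (MExp.fin_int hw hx)).1
  have hNg : (S.μ S.P)⁻¹ * ∫⁻ x in S.P, g x ∂S.μ = 2⁻¹ * (Npf S u + Npf S w) := by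
    rw [hg, lintegral_const_mul' _ _ (by simp), lintegral_add_right' _ (MExp.kl_aem hw)]
    unfold Npf
    ring
  have hm0 : (S.μ S.P)⁻¹ ≠ 0 := ENNReal.inv_ne_zero.2 S.muP_ne_top
  have hmt : (S.μ S.P)⁻¹ ≠ ⊤ := ENNReal.inv_ne_top.2 S.muP_ne_zero
  rw [← hNg] at h
  have hgf : ∫⁻ x in S.P, g x ∂S.μ ≤ ∫⁻ x in S.P, f x ∂S.μ :=
    (ENNReal.mul_le_mul_iff_right hm0 hmt).1 h
  have hgt : ∫⁻ x in S.P, g x ∂S.μ ≠ ⊤ := by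
    intro ht
    rw [ht, ENNReal.mul_top hm0] at hNg
    exact (ENNReal.mul_ne_top (by simp) (ENNReal.add_ne_top.2 ⟨hNu, hNw⟩)) hNg.symm
  have hft : ∫⁻ x in S.P, f x ∂S.μ ≠ ⊤ := ne_top_of_le_ne_top hgt (lintegral_mono_ae hle)
  have hae := ae_eq_of_ae_le_of_lintegral_le hle hft hgm hgf
  refine int_eq hu hw ?_
  filter_upwards [S.ae_int_mu, hae] with x hx he
  exact (kl_mid (MExp.fin_int hu hx) (MExp.fin_int hw hx)).2 he

lemma Npf_congr {n : ℕ} {S : NSystem n} {u w : Euc n → ℝ≥0∞}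
    (h : ∀ x ∈ interior S.P, u x = w x) : Npf S u = Npf S w := by
  unfold Npf
  congr 1
  refine lintegral_congr_ae ?_
  filter_upwards [S.ae_int_mu] with x hx
  rw [h x hx]

lemma Npf_zero {n : ℕ} {S : NSystem n} {u : Euc n → ℝ≥0∞} (hu : u ∈ MExp S 1)
    (h : Npf S u = 0) : (∀ x ∈ interior S.P, u x = 1) ∧ Upf S (fun _ => 1) ≤ Upf S u := by
  have h1 : ∀ x ∈ interior S.P, u x = 1 := by
    refine int_eq hu (one_mem S) ?_
    have h2 : ∫⁻ x in S.P, ENNReal.ofReal (InformationTheory.klFun (u x).toReal) ∂S.μ = 0 :=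
      (mul_eq_zero.1 h).resolve_left (ENNReal.inv_ne_zero.2 S.muP_ne_top)
    rw [lintegral_eq_zero_iff' (MExp.kl_aem hu)] at h2
    filter_upwards [S.ae_int_mu, h2] with x hx he
    have h3 : InformationTheory.klFun (u x).toReal ≤ 0 := ENNReal.ofReal_eq_zero.1 he
    have h4 := (InformationTheory.klFun_eq_zero_iff ENNReal.toReal_nonneg).1
      (le_antisymm h3 (InformationTheory.klFun_nonneg ENNReal.toReal_nonneg))
    rw [← ENNReal.ofReal_toReal (MExp.fin_int hu hx), h4, ENNReal.ofReal_one]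
  refine ⟨h1, ?_⟩
  unfold Upf
  refine mul_le_mul' le_rfl ?_
  refine lintegral_mono_ae ?_
  filter_upwards [ae_restrict_mem (isClosed_frontier (s := S.P)).measurableSet] with x hx
  obtain ⟨z, hz⟩ := S.simple.1.2.1
  have hxP := S.frontier_sub hx
  have hm : (1 - (1 / 2 : ℝ)) • x + (1 / 2 : ℝ) • z ∈ interior S.P :=
    S.convex.combo_self_interior_mem_interior hxP hz (by norm_num) (by norm_num) (by norm_num)
  have h5 := hu.2.2.1 hxP (interior_subset hz) (t := 1 / 2) (by norm_num) (by norm_num)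
  rw [h1 _ hm, h1 _ hz, ENNReal.one_rpow, mul_one] at h5
  by_contra hlt
  push Not at hlt
  exact absurd h5 (not_le.2 (ENNReal.rpow_lt_one hlt (by norm_num)))

lemma can_facts {n : ℕ} {S : NSystem n} {T : ℝ} (hT : 0 ≤ T) {u : Euc n → ℝ≥0∞}
    (hc : IsCanonical S T u) : Npf S u ≠ ⊤ ∧ ∀ u' ∈ MExp S 1,
      Upf S u + ENNReal.ofReal T * Npf S u ≤ Upf S u' + ENNReal.ofReal T * Npf S u' := by
  obtain ⟨hu, hpos, hzero⟩ := hc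
  rcases hT.eq_or_lt with h | h
  · obtain ⟨h1, h2⟩ := hzero h.symm
    refine ⟨Npf_ne_top hu (ne_top_of_le_ne_top (Upf_one_ne_top S) (h1 _ (one_mem S))), ?_⟩
    intro u' hu'
    simpa [← h] using h1 u' hu'
  · have hN : Npf S u ≠ ⊤ := by
      intro hN
      have h1 := hpos h _ (one_mem S)
      rw [Fpf_top hu hN, Fpf_eq (one_mem S) (by simp [Npf_one]) hT, Npf_one, mul_zero, add_zero,
        top_le_iff] at h1
      exact Upf_one_ne_top S (EReal.coe_ennreal_eq_top_iff.1 h1)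
    refine ⟨hN, fun u' hu' => ?_⟩
    by_cases hN' : Npf S u' = ⊤
    · rw [hN', ENNReal.mul_top (by simpa using h), add_top]
      exact le_top
    · have h1 := hpos h u' hu'
      rw [Fpf_eq hu hN hT, Fpf_eq hu' hN' hT] at h1
      exact_mod_cast h1

lemma can_le_one {n : ℕ} {S : NSystem n} {T : ℝ} (hT : 0 ≤ T) {u : Euc n → ℝ≥0∞}
    (hc : IsCanonical S T u) :
    Upf S u + ENNReal.ofReal T * Npf S u ≤ Upf S (fun _ => 1) := by
  have := (can_facts hT hc).2 _ (one_mem S)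
  rwa [Npf_one, mul_zero, add_zero] at this

lemma can_unique {n : ℕ} {S : NSystem n} {T : ℝ} (hT : 0 ≤ T) {u w : Euc n → ℝ≥0∞}
    (hc : IsCanonical S T u) (hw : w ∈ MExp S 1)
    (h1 : Upf S w + ENNReal.ofReal T * Npf S w ≤ Upf S u + ENNReal.ofReal T * Npf S u)
    (h2 : T = 0 → Npf S w ≤ Npf S u) :
    (∀ x ∈ interior S.P, w x = u x) ∧ Upf S w = Upf S u ∧ Npf S w = Npf S u := by
  have hu := hc.1
  obtain ⟨hNu, hopt⟩ := can_facts hT hc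
  have hle := can_le_one hT hc
  have hUu : Upf S u ≠ ⊤ := ne_top_of_le_ne_top (Upf_one_ne_top S) (le_self_add.trans hle)
  have hUw : Upf S w ≠ ⊤ :=
    ne_top_of_le_ne_top (Upf_one_ne_top S) (le_self_add.trans (h1.trans hle))
  have hNw := Npf_ne_top hw hUw
  have hm := mid_mem hu hw
  have hUm := Upf_mid (S := S) (u := u) hw
  have hUmt : Upf S (midf u w) ≠ ⊤ := by
    rw [hUm]; exact ENNReal.mul_ne_top (by simp) (ENNReal.add_ne_top.2 ⟨hUu, hUw⟩)
  have hNm := Npf_ne_top hm hUmt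
  have hkey : 2⁻¹ * (Npf S u + Npf S w) ≤ Npf S (midf u w) := by
    have e2 : ∀ a b : ℝ≥0, (2⁻¹ : ℝ≥0∞) * ((a : ℝ≥0∞) + b) = ((2⁻¹ * (a + b) : ℝ≥0) : ℝ≥0∞) := by
      intro a b; push_cast; simp
    rcases hT.eq_or_lt with h | h
    · obtain ⟨h3, h4⟩ := hc.2.2 h.symm
      have h5 : Upf S w ≤ Upf S u := by simpa [← h] using h1
      have h6 : Upf S (midf u w) ≤ Upf S u := by
        rw [hUm]
        calc _ ≤ 2⁻¹ * (Upf S u + Upf S u) := by gcongr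
          _ = _ := by rw [← two_mul, ← mul_assoc, ENNReal.inv_mul_cancel (by simp) (by simp), one_mul]
      have h7 := h4 _ hm (fun u'' hu'' => h6.trans (h3 _ hu''))
      rw [Spf_eq hm, Spf_eq hu, EReal.neg_le_neg_iff] at h7
      have h8 : Npf S u ≤ Npf S (midf u w) := by exact_mod_cast h7
      refine le_trans ?_ h8
      calc _ ≤ 2⁻¹ * (Npf S u + Npf S u) := by gcongr; exact h2 h.symm
          _ = _ := by rw [← two_mul, ← mul_assoc, ENNReal.inv_mul_cancel (by simp) (by simp), one_mul]
    · have h3 := hopt _ hm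
      rw [hUm] at h3
      generalize Npf S u = a, Npf S w = b, Npf S (midf u w) = c, Upf S u = d, Upf S w = e at *
      lift a to ℝ≥0 using hNu
      lift b to ℝ≥0 using hNw
      lift c to ℝ≥0 using hNm
      lift d to ℝ≥0 using hUu
      lift e to ℝ≥0 using hUw
      rw [e2] at h3 ⊢
      have e3 : ENNReal.ofReal T = ((T.toNNReal : ℝ≥0) : ℝ≥0∞) := rfl
      rw [e3] at h1 h3
      have hT' : (T.toNNReal : ℝ) = T := Real.coe_toNNReal T hT
      norm_cast at h1 h3 ⊢
      rw [← NNReal.coe_le_coe] at h1 h3 ⊢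
      push_cast at h1 h3 ⊢
      rw [hT'] at h1 h3
      refine le_of_mul_le_mul_left ?_ h
      linarith
  have heq := Npf_mid hu hw hNu hNw hkey
  have hN := Npf_congr heq
  refine ⟨fun x hx => (heq x hx).symm, ?_, hN.symm⟩
  have h3 := hopt _ hw
  rw [hN] at h1 h3
  have ht : ENNReal.ofReal T * Npf S w ≠ ⊤ := ENNReal.mul_ne_top (by simp) hNw
  exact le_antisymm ((ENNReal.add_le_add_iff_right ht).1 h1) ((ENNReal.add_le_add_iff_right ht).1 h3)

lemma lim_real {x : ℕ → ℝ≥0∞} {x0 : ℝ≥0∞} (h0 : x0 ≠ ⊤) (hx : ∀ k, x k ≠ ⊤)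
    (h : x0 ≤ liminf x atTop) {ε : ℝ} (hε : 0 < ε) :
    ∀ᶠ k in atTop, x0.toReal - ε ≤ (x k).toReal := by
  rcases le_or_gt (x0.toReal - ε) 0 with h1 | h1
  · exact Eventually.of_forall fun k => h1.trans ENNReal.toReal_nonneg
  · have h2 : ENNReal.ofReal (x0.toReal - ε) < x0 := by
      rw [ENNReal.ofReal_lt_iff_lt_toReal h1.le h0]
      linarith
    filter_upwards [eventually_lt_of_lt_liminf (h2.trans_le h)] with k hk
    exact ((ENNReal.ofReal_lt_iff_lt_toReal h1.le (hx k)).1 hk).le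

lemma real_lsc {a b t : ℕ → ℝ} {t0 a0 b0 a1 b1 : ℝ} (ht : Tendsto t atTop (𝓝 t0))
    (htk : ∀ k, 0 ≤ t k) (ht0 : 0 ≤ t0)
    (ha : ∀ ε > 0, ∀ᶠ k in atTop, a1 - ε ≤ a k) (hb : ∀ ε > 0, ∀ᶠ k in atTop, b1 - ε ≤ b k)
    (h : ∀ k, a k + t k * b k ≤ a0 + t k * b0) : a1 + t0 * b1 ≤ a0 + t0 * b0 := by
  have key : ∀ ε > 0, a1 - ε + t0 * (b1 - ε) ≤ a0 + t0 * b0 := by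
    intro ε hε
    refine le_of_tendsto_of_tendsto (b := atTop) (f := fun k => a1 - ε + t k * (b1 - ε))
      (g := fun k => a0 + t k * b0) ((ht.mul_const _).const_add _) ((ht.mul_const _).const_add _) ?_
    filter_upwards [ha ε hε, hb ε hε] with k h1 h2
    have := mul_le_mul_of_nonneg_left h2 (htk k)
    linarith [h k]
  refine le_of_forall_pos_le_add fun δ hδ => ?_
  have := key (δ / (1 + t0)) (by positivity)
  have e : δ / (1 + t0) * (1 + t0) = δ := by field_simp
  nlinarith

lemma real_conv {a b t : ℕ → ℝ} {t0 a0 b0 : ℝ} (ht : Tendsto t atTop (𝓝 t0))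
    (htk : ∀ k, 0 ≤ t k) (ht0 : 0 ≤ t0)
    (ha : ∀ ε > 0, ∀ᶠ k in atTop, a0 - ε ≤ a k) (hb : ∀ ε > 0, ∀ᶠ k in atTop, b0 - ε ≤ b k)
    (h : ∀ k, a k + t k * b k ≤ a0 + t k * b0) (hz : t0 = 0 → ∀ k, b k ≤ b0) :
    Tendsto a atTop (𝓝 a0) ∧ Tendsto b atTop (𝓝 b0) := by
  have ht1 : ∀ᶠ k in atTop, t k < t0 + 1 := ht.eventually_lt_const (by linarith)
  constructor
  · refine Metric.tendsto_atTop'.2 fun ε hε => ?_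
    have hδ : 0 < ε / (2 * (t0 + 1)) := by positivity
    have e : ε / (2 * (t0 + 1)) * (t0 + 1) = ε / 2 := by field_simp
    obtain ⟨N, hN⟩ := eventually_atTop.1 (ht1.and ((ha (ε / 2) (by linarith)).and (hb _ hδ)))
    refine ⟨N, fun k hk => ?_⟩
    obtain ⟨h1, h2, h3⟩ := hN k hk.le
    have h4 := mul_le_mul_of_nonneg_left h3 (htk k)
    have h5 := mul_le_mul_of_nonneg_left h1.le hδ.le
    rw [Real.dist_eq, abs_lt]
    constructor
    · linarith
    · nlinarith [h k]
  · rcases ht0.eq_or_lt with h0 | h0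
    · refine Metric.tendsto_atTop'.2 fun ε hε => ?_
      obtain ⟨N, hN⟩ := eventually_atTop.1 (hb (ε / 2) (by linarith))
      refine ⟨N, fun k hk => ?_⟩
      have := hN k hk.le
      have := hz h0.symm k
      rw [Real.dist_eq, abs_lt]
      constructor <;> linarith
    · have ht2 : ∀ᶠ k in atTop, t0 / 2 < t k := ht.eventually_const_lt (by linarith)
      refine Metric.tendsto_atTop'.2 fun ε hε => ?_
      obtain ⟨N, hN⟩ := eventually_atTop.1 (ht2.and ((ha (ε * t0 / 4) (by positivity)).and
        (hb (ε / 2) (by linarith))))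
      refine ⟨N, fun k hk => ?_⟩
      obtain ⟨h1, h2, h3⟩ := hN k hk.le
      rw [Real.dist_eq, abs_lt]
      constructor
      · linarith
      · by_contra hc
        push Not at hc
        have h4 : t0 / 2 * ε ≤ t k * (b k - b0) := mul_le_mul h1.le hc hε.le (htk k)
        have h5 : 0 < ε * t0 := by positivity
        linarith [h k]

lemma opt_real {n : ℕ} {S : NSystem n} {T : ℝ} (hT : 0 ≤ T) {u w : Euc n → ℝ≥0∞}
    (hUu : Upf S u ≠ ⊤) (hNu : Npf S u ≠ ⊤) (hUw : Upf S w ≠ ⊤) (hNw : Npf S w ≠ ⊤) :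
    Upf S u + ENNReal.ofReal T * Npf S u ≤ Upf S w + ENNReal.ofReal T * Npf S w ↔
    (Upf S u).toReal + T * (Npf S u).toReal ≤ (Upf S w).toReal + T * (Npf S w).toReal := by
  have h1 : ENNReal.ofReal T * Npf S u ≠ ⊤ := ENNReal.mul_ne_top (by simp) hNu
  have h2 : ENNReal.ofReal T * Npf S w ≠ ⊤ := ENNReal.mul_ne_top (by simp) hNw
  rw [← ENNReal.toReal_le_toReal (ENNReal.add_ne_top.2 ⟨hUu, h1⟩) (ENNReal.add_ne_top.2 ⟨hUw, h2⟩),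
    ENNReal.toReal_add hUu h1, ENNReal.toReal_add hUw h2, ENNReal.toReal_mul, ENNReal.toReal_mul,
    ENNReal.toReal_ofReal hT]

lemma can_U_le {n : ℕ} {S : NSystem n} {T : ℝ} (hT : 0 ≤ T) {u : Euc n → ℝ≥0∞}
    (hc : IsCanonical S T u) : Upf S u ≤ Upf S (fun _ => 1) :=
  le_self_add.trans (can_le_one hT hc)

lemma can_U_ne {n : ℕ} {S : NSystem n} {T : ℝ} (hT : 0 ≤ T) {u : Euc n → ℝ≥0∞}
    (hc : IsCanonical S T u) : Upf S u ≠ ⊤ :=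
  ne_top_of_le_ne_top (Upf_one_ne_top S) (can_U_le hT hc)

lemma can_N_le {n : ℕ} {S : NSystem n} {T : ℝ} (hT : 0 ≤ T) {u u0 : Euc n → ℝ≥0∞}
    (hc : IsCanonical S T u) (hc0 : IsCanonical S 0 u0) : Npf S u ≤ Npf S u0 := by
  obtain ⟨h1, h2⟩ := hc0.2.2 rfl
  rcases hT.eq_or_lt with h | h
  · subst h
    have h7 := h2 u hc.1 (hc.2.2 rfl).1
    have h8 := (hc.2.2 rfl).2 u0 hc0.1 h1
    rw [Spf_eq hc.1, Spf_eq hc0.1, EReal.neg_le_neg_iff] at h8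
    exact_mod_cast h8
  · have hNu := (can_facts hT hc).1
    have hNu0 := (can_facts le_rfl hc0).1
    have h3 := (opt_real hT (can_U_ne hT hc) hNu (can_U_ne le_rfl hc0) hNu0).1
      ((can_facts hT hc).2 u0 hc0.1)
    have h4 := (ENNReal.toReal_le_toReal (can_U_ne le_rfl hc0) (can_U_ne hT hc)).2 (h1 u hc.1)
    rw [← ENNReal.toReal_le_toReal hNu hNu0]
    refine le_of_mul_le_mul_left ?_ h
    linarith

lemma seq_core {n : ℕ} {S : NSystem n} {ucan : ℝ → Euc n → ℝ≥0∞}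
    (hcan : ∀ T : ℝ, 0 ≤ T → IsCanonical S T (ucan T)) {T0 : ℝ} (hT0 : 0 ≤ T0) {s : ℕ → ℝ}
    (hs : ∀ k, 0 ≤ s k) (hlim : Tendsto s atTop (𝓝 T0)) :
    ∃ φ : ℕ → ℕ, StrictMono φ ∧
      (∀ x ∈ interior S.P, Tendsto (fun k => ucan (s (φ k)) x) atTop (𝓝 (ucan T0 x))) ∧
      Tendsto (fun k => Upf S (ucan (s (φ k)))) atTop (𝓝 (Upf S (ucan T0))) ∧
      Tendsto (fun k => Npf S (ucan (s (φ k)))) atTop (𝓝 (Npf S (ucan T0))) := by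
  obtain ⟨φ, hφ, w, hw, hpt, hU⟩ := compactness (u := fun k => ucan (s k))
    (fun k => (hcan _ (hs k)).1) (Upf_one_ne_top S) (fun k => can_U_le (hs k) (hcan _ (hs k)))
  have hN := Npf_lsc (v := fun k => ucan (s (φ k))) (fun k => (hcan _ (hs _)).1) hw hpt
  have hUk : ∀ k, Upf S (ucan (s (φ k))) ≠ ⊤ := fun k => can_U_ne (hs _) (hcan _ (hs _))
  have hNk : ∀ k, Npf S (ucan (s (φ k))) ≠ ⊤ := fun k => (can_facts (hs _) (hcan _ (hs _))).1
  have hU0 := can_U_ne hT0 (hcan _ hT0)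
  have hN0 := (can_facts hT0 (hcan _ hT0)).1
  have hUw : Upf S w ≠ ⊤ := by
    refine ne_top_of_le_ne_top (Upf_one_ne_top S) (hU.trans ?_)
    refine (liminf_le_liminf (Eventually.of_forall fun k =>
      can_U_le (hs (φ k)) (hcan _ (hs (φ k))))).trans ?_
    simp
  have hNw := Npf_ne_top hw hUw
  have hopt : ∀ k, (Upf S (ucan (s (φ k)))).toReal + s (φ k) * (Npf S (ucan (s (φ k)))).toReal ≤
      (Upf S (ucan T0)).toReal + s (φ k) * (Npf S (ucan T0)).toReal := fun k =>
    (opt_real (hs _) (hUk k) (hNk k) hU0 hN0).1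
      ((can_facts (hs _) (hcan _ (hs _))).2 _ (hcan _ hT0).1)
  have ht : Tendsto (fun k => s (φ k)) atTop (𝓝 T0) := hlim.comp hφ.tendsto_atTop
  have hR := real_lsc ht (fun k => hs _) hT0 (fun ε hε => lim_real hUw hUk hU hε)
    (fun ε hε => lim_real hNw hNk hN hε) hopt
  have hz : T0 = 0 → ∀ k, Npf S (ucan (s (φ k))) ≤ Npf S (ucan T0) := by
    intro h0 k
    subst h0
    exact can_N_le (hs _) (hcan _ (hs _)) (hcan _ hT0)
  obtain ⟨e1, e2, e3⟩ := can_unique hT0 (hcan _ hT0) hw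
    ((opt_real hT0 hUw hNw hU0 hN0).2 hR) (by
      intro h0
      refine hN.trans ((liminf_le_liminf (Eventually.of_forall fun k => hz h0 k)).trans ?_)
      simp)
  rw [e2] at hU
  rw [e3] at hN
  have hC := real_conv ht (fun k => hs _) hT0 (fun ε hε => lim_real hU0 hUk hU hε)
    (fun ε hε => lim_real hN0 hNk hN hε) hopt
    (fun h0 k => (ENNReal.toReal_le_toReal (hNk k) hN0).2 (hz h0 k))
  refine ⟨φ, hφ, fun x hx => ?_, (ENNReal.tendsto_toReal_iff hUk hU0).1 hC.1,
    (ENNReal.tendsto_toReal_iff hNk hN0).1 hC.2⟩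
  rw [← e1 x hx]
  exact hpt x hx

lemma seq_inf {n : ℕ} {S : NSystem n} {ucan : ℝ → Euc n → ℝ≥0∞}
    (hcan : ∀ T : ℝ, 0 ≤ T → IsCanonical S T (ucan T)) {s : ℕ → ℝ}
    (hs : ∀ k, 0 ≤ s k) (hlim : Tendsto s atTop atTop) :
    ∃ φ : ℕ → ℕ, StrictMono φ ∧
      (∀ x ∈ interior S.P, Tendsto (fun k => ucan (s (φ k)) x) atTop (𝓝 1)) ∧
      Tendsto (fun k => Upf S (ucan (s (φ k)))) atTop (𝓝 (Upf S (fun _ => 1))) ∧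
      Tendsto (fun k => ENNReal.ofReal (s (φ k)) * Npf S (ucan (s (φ k)))) atTop (𝓝 0) := by
  obtain ⟨φ, hφ, w, hw, hpt, hU⟩ := compactness (u := fun k => ucan (s k))
    (fun k => (hcan _ (hs k)).1) (Upf_one_ne_top S) (fun k => can_U_le (hs k) (hcan _ (hs k)))
  have hN := Npf_lsc (v := fun k => ucan (s (φ k))) (fun k => (hcan _ (hs _)).1) hw hpt
  have hUk : ∀ k, Upf S (ucan (s (φ k))) ≠ ⊤ := fun k => can_U_ne (hs _) (hcan _ (hs _))
  have ht : Tendsto (fun k => s (φ k)) atTop atTop := hlim.comp hφ.tendsto_atTop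
  have hle : ∀ k, Upf S (ucan (s (φ k))) + ENNReal.ofReal (s (φ k)) * Npf S (ucan (s (φ k))) ≤
      Upf S (fun _ => 1) := fun k => can_le_one (hs _) (hcan _ (hs _))
  have ht' : Tendsto (fun k => ENNReal.ofReal (s (φ k))) atTop (𝓝 ⊤) :=
    ENNReal.tendsto_ofReal_atTop.comp ht
  have hq : Tendsto (fun k => Upf S (fun _ => 1) / ENNReal.ofReal (s (φ k))) atTop (𝓝 0) := by
    have := ENNReal.Tendsto.const_div (a := Upf S (fun _ => 1)) ht' (Or.inr (Upf_one_ne_top S))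
    simpa using this
  have hN0 : Npf S w = 0 := by
    refine le_antisymm (hN.trans ?_) bot_le
    rw [← hq.liminf_eq]
    refine liminf_le_liminf ?_
    filter_upwards [ht.eventually_gt_atTop 0] with k hk
    rw [ENNReal.le_div_iff_mul_le (Or.inl (by simpa using hk)) (Or.inl (by simp)), mul_comm]
    exact le_add_self.trans (hle k)
  obtain ⟨h1, h2⟩ := Npf_zero hw hN0
  have hUl : Tendsto (fun k => Upf S (ucan (s (φ k)))) atTop (𝓝 (Upf S (fun _ => 1))) := by
    refine tendsto_of_le_liminf_of_limsup_le (h2.trans hU) ?_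
    refine (limsup_le_limsup (Eventually.of_forall fun k =>
      can_U_le (hs (φ k)) (hcan _ (hs (φ k))))).trans ?_
    simp
  refine ⟨φ, hφ, fun x hx => ?_, hUl, ?_⟩
  · rw [← h1 x hx]
    exact hpt x hx
  · have h3 := ENNReal.Tendsto.sub (tendsto_const_nhds (x := Upf S (fun _ => 1)) (f := atTop)) hUl
      (Or.inl (Upf_one_ne_top S))
    rw [tsub_self] at h3
    refine tendsto_of_tendsto_of_tendsto_of_le_of_le tendsto_const_nhds h3 (fun k => bot_le) ?_
    intro k
    exact ENNReal.le_sub_of_add_le_left (hUk k) (hle k)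

lemma seq_filter {α : Type*} {f : ℝ → α} {l : Filter ℝ} [l.IsCountablyGenerated] {g : Filter α}
    (hl : ∀ᶠ T in l, 0 ≤ T) (h : ∀ s : ℕ → ℝ, (∀ k, 0 ≤ s k) → Tendsto s atTop l →
      ∃ φ : ℕ → ℕ, Tendsto (fun k => f (s (φ k))) atTop g) : Tendsto f l g := by
  refine tendsto_of_subseq_tendsto fun ns hns => ?_
  obtain ⟨N, hN⟩ := eventually_atTop.1 (hns.eventually hl)
  obtain ⟨φ, hφ⟩ := h (fun k => ns (k + N)) (fun k => hN _ (by omega))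
    (hns.comp (tendsto_add_atTop_nat N))
  exact ⟨fun k => φ k + N, hφ⟩

lemma exists_q2 {n : ℕ} {p : ℝ} (hp : 1 ≤ p) (h : p < (n : ℝ) / ((n : ℝ) - 1)) :
    ∃ q, p < q ∧ 1 ≤ q ∧ (q - 1) * ((n : ℝ) - 1) < 1 := by
  have hn : 0 < (n : ℝ) - 1 := by
    by_contra hc
    have := div_nonpos_of_nonneg_of_nonpos (Nat.cast_nonneg (α := ℝ) n) (not_lt.1 hc)
    linarith
  obtain ⟨q, h1, h2⟩ := exists_between h
  refine ⟨q, h1, by linarith, ?_⟩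
  rw [lt_div_iff₀ hn] at h2
  linarith

/-- Continuity of the family of μ-canonical distributions on `[0,∞]` (with
`u_∞^can = 1_P`): `T ↦ u_T^can` is continuous into `L^p(P,μ)` for every
`p ∈ [1, n/(n−1))` (including at `T = ∞`), the functions `T ↦ F_𝒫(T,u_T^can)`,
`T ↦ U_𝒫(u_T^can)`, `T ↦ S_𝒫(u_T^can)` are continuous on `[0,∞)`, and
`F_𝒫(T,u_T^can) → U_𝒫(1_P)`, `U_𝒫(u_T^can) → U_𝒫(1_P)`, `T·S_𝒫(u_T^can) → 0`
as `T → ∞`. -/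
theorem canonical_family_continuous (n : ℕ) (S : NSystem n)
    (ucan : ℝ → Euc n → ℝ≥0∞)
    (hcan : ∀ T : ℝ, 0 ≤ T → IsCanonical S T (ucan T)) :
    (∀ p : ℝ, 1 ≤ p → p < (n : ℝ) / ((n : ℝ) - 1) →
      (∀ T0 : ℝ, 0 ≤ T0 →
        Tendsto (fun T => ∫⁻ x in S.P,
            ((ucan T x - ucan T0 x) + (ucan T0 x - ucan T x)) ^ p ∂S.μ)
          (𝓝[Set.Ici (0 : ℝ)] T0) (𝓝 0)) ∧
      Tendsto (fun T => ∫⁻ x in S.P,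
          ((ucan T x - 1) + (1 - ucan T x)) ^ p ∂S.μ) atTop (𝓝 0)) ∧
    ContinuousOn (fun T => Fpf S T (ucan T)) (Set.Ici (0 : ℝ)) ∧
    ContinuousOn (fun T => Upf S (ucan T)) (Set.Ici (0 : ℝ)) ∧
    ContinuousOn (fun T => Spf S (ucan T)) (Set.Ici (0 : ℝ)) ∧
    Tendsto (fun T : ℝ => Fpf S T (ucan T)) atTop
      (𝓝 ((Upf S (fun _ => 1) : ℝ≥0∞) : EReal)) ∧
    Tendsto (fun T : ℝ => Upf S (ucan T)) atTop (𝓝 (Upf S (fun _ => 1))) ∧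
    Tendsto (fun T : ℝ => (T : EReal) * Spf S (ucan T)) atTop (𝓝 (0 : EReal)) := by
  have hev : ∀ T0 : ℝ, ∀ᶠ T in 𝓝[Set.Ici (0 : ℝ)] T0, 0 ≤ T := fun T0 =>
    eventually_mem_nhdsWithin
  have hevt : ∀ᶠ T : ℝ in atTop, 0 ≤ T := eventually_ge_atTop 0
  have hUc : ∀ T0 : ℝ, 0 ≤ T0 → Tendsto (fun T => Upf S (ucan T)) (𝓝[Set.Ici (0 : ℝ)] T0)
      (𝓝 (Upf S (ucan T0))) := by
    intro T0 hT0
    refine seq_filter (hev T0) fun s hs hl => ?_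
    obtain ⟨φ, -, -, h, -⟩ := seq_core hcan hT0 hs (hl.mono_right nhdsWithin_le_nhds)
    exact ⟨φ, h⟩
  have hNc : ∀ T0 : ℝ, 0 ≤ T0 → Tendsto (fun T => Npf S (ucan T)) (𝓝[Set.Ici (0 : ℝ)] T0)
      (𝓝 (Npf S (ucan T0))) := by
    intro T0 hT0
    refine seq_filter (hev T0) fun s hs hl => ?_
    obtain ⟨φ, -, -, -, h⟩ := seq_core hcan hT0 hs (hl.mono_right nhdsWithin_le_nhds)
    exact ⟨φ, h⟩
  have hUi : Tendsto (fun T => Upf S (ucan T)) atTop (𝓝 (Upf S (fun _ => 1))) := by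
    refine seq_filter hevt fun s hs hl => ?_
    obtain ⟨φ, -, -, h, -⟩ := seq_inf hcan hs hl
    exact ⟨φ, h⟩
  have hNi : Tendsto (fun T => ENNReal.ofReal T * Npf S (ucan T)) atTop (𝓝 0) := by
    refine seq_filter hevt fun s hs hl => ?_
    obtain ⟨φ, -, -, -, h⟩ := seq_inf hcan hs hl
    exact ⟨φ, h⟩
  have hNt : ∀ T : ℝ, 0 ≤ T → Npf S (ucan T) ≠ ⊤ := fun T hT => (can_facts hT (hcan T hT)).1
  refine ⟨?_, ?_, hUc, ?_, ?_, hUi, ?_⟩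
  · intro p hp hpn
    obtain ⟨q, hpq, hq, hqn⟩ := exists_q2 hp hpn
    constructor
    · intro T0 hT0
      refine seq_filter (hev T0) fun s hs hl => ?_
      obtain ⟨φ, -, h, -, -⟩ := seq_core hcan hT0 hs (hl.mono_right nhdsWithin_le_nhds)
      exact ⟨φ, Lp_conv (fun k => (hcan _ (hs _)).1) (Upf_one_ne_top S)
        (fun k => can_U_le (hs _) (hcan _ (hs _))) (hcan _ hT0).1 h (by linarith) hpq hq hqn⟩
    · refine seq_filter hevt fun s hs hl => ?_
      obtain ⟨φ, -, h, -, -⟩ := seq_inf hcan hs hl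
      exact ⟨φ, Lp_conv (fun k => (hcan _ (hs _)).1) (Upf_one_ne_top S)
        (fun k => can_U_le (hs _) (hcan _ (hs _))) (one_mem S) h (by linarith) hpq hq hqn⟩
  · intro T0 hT0
    have hT0' : 0 ≤ T0 := hT0
    have h1 : Tendsto (fun T => Upf S (ucan T) + ENNReal.ofReal T * Npf S (ucan T))
        (𝓝[Set.Ici (0 : ℝ)] T0) (𝓝 (Upf S (ucan T0) + ENNReal.ofReal T0 * Npf S (ucan T0))) := by
      refine (hUc T0 hT0').add (ENNReal.Tendsto.mul ?_ (Or.inr (hNt T0 hT0')) (hNc T0 hT0')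
        (Or.inr (by simp)))
      exact (ENNReal.continuous_ofReal.tendsto T0).mono_left nhdsWithin_le_nhds
    have h2 := (continuous_coe_ennreal_ereal.tendsto _).comp h1
    unfold ContinuousWithinAt
    beta_reduce
    rw [Fpf_eq (hcan T0 hT0').1 (hNt T0 hT0') hT0']
    refine h2.congr' ?_
    filter_upwards [hev T0] with T hT
    exact (Fpf_eq (hcan T hT).1 (hNt T hT) hT).symm
  · intro T0 hT0
    have hT0' : 0 ≤ T0 := hT0
    have h2 := (continuous_neg.tendsto _).comp
      ((continuous_coe_ennreal_ereal.tendsto _).comp (hNc T0 hT0'))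
    unfold ContinuousWithinAt
    beta_reduce
    rw [Spf_eq (hcan T0 hT0').1]
    refine h2.congr' ?_
    filter_upwards [hev T0] with T hT
    exact (Spf_eq (hcan T hT).1).symm
  · have h1 := hUi.add hNi
    rw [add_zero] at h1
    have h2 := (continuous_coe_ennreal_ereal.tendsto _).comp h1
    refine h2.congr' ?_
    filter_upwards [hevt] with T hT
    exact (Fpf_eq (hcan T hT).1 (hNt T hT) hT).symm
  · have h2 := (continuous_neg.tendsto _).comp ((continuous_coe_ennreal_ereal.tendsto _).comp hNi)
    simp only [EReal.coe_ennreal_zero, neg_zero] at h2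
    refine h2.congr' ?_
    filter_upwards [hevt] with T hT
    rw [Spf_eq (hcan T hT).1]
    simp only [Function.comp]
    rw [EReal.coe_ennreal_mul, EReal.coe_ennreal_ofReal, max_eq_left hT, mul_neg]

end
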